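/- arXiv:1710.08143 — 2 statements merged into one kernel-verified Lean document; each statement's English description precedes it below -/
import Mathlib

section
/- Let G be a finite connected simple graph that contains at least one cycle. Then the distinguishing index of G is at most the distinguishing number of G, i.e., D'(G) ≤ D(G). -/
open SimpleGraph

/-- The distinguishing number of a simple graph `G`: the least `d` such that there is a
vertex labeling with `d` labels preserved only by the trivial automorphism. -/
noncomputable def distinguishingNumber {V : Type*} (G : SimpleGraph V) : ℕ :=
  sInf {d : ℕ | ∃ φ : V → Fin d,
    ∀ f : G ≃g G, (∀ x : V, φ (f x) = φ x) → ∀ x : V, f x = x}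

/-- The distinguishing index of a simple graph `G`: the least `d` such that there is an
edge labeling with `d` labels preserved only by the trivial automorphism. -/
noncomputable def distinguishingIndex {V : Type*} (G : SimpleGraph V) : ℕ :=
  sInf {d : ℕ | ∃ ψ : G.edgeSet → Fin d,
    ∀ f : G ≃g G, (∀ e : G.edgeSet, ψ (f.mapEdgeSet e) = ψ e) → ∀ x : V, f x = x}

/-!
Let `c` be a distinguishing vertex labeling with `d` labels.

If all cycles of `G` share an edge, any two cycles have the same edges, so every automorphism
preserves any given cycle. Each vertex off this cycle passes its label to the edge towards its
parent, the next vertex on a shortest path to the cycle, and the edges of the cycle are labeled so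
that no nontrivial symmetry survives. If `4 ≤ d`, one label is reserved for the edges that are
neither on the cycle nor of this form; then any cycle is recognised by the labeling, and its
symmetry is broken by the three other labels.

For `d = 2` and `d = 3` the labels are elements of the field `ZMod d`, and an edge receives the sum
of the labels of its ends. If a nontrivial `γ` preserves these sums, `c ∘ γ - c` is nowhere zero and
changes sign along every edge. Dividing by such an alternating function shows that, after the label
of one edge `e` is changed, a preserving automorphism can move `e` only to an edge lying on the same
cycles as `e`. If every edge of some cycle is alone in its class, changing a suitable edge of that
cycle leaves no symmetry. Otherwise one cuts `G` along a class; when no edge is shared by all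
cycles, some piece contains a cycle, and a maximal such piece is invariant and has at most two
boundary edges. Changing one of them works, for `d = 2` after `c` has been adjusted at its ends so
that neither the piece nor its complement carries equally many labels `0` and `1`.
-/

section DistinguishingLabelings

variable {V L : Type*} {G : SimpleGraph V}

/-- A vertex labeling preserved only by the trivial automorphism. -/
def IsDistinguishingVertexLabeling (G : SimpleGraph V) (c : V → L) : Prop :=
  ∀ γ : G ≃g G, (∀ x, c (γ x) = c x) → ∀ x, γ x = x

/-- The automorphism `γ` preserves the edge labeling `ψ`. Edge labelings are functions on all
unordered pairs, of which only the values on edges matter. -/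
def PreservesEdgeLabeling (G : SimpleGraph V) (ψ : Sym2 V → L) (γ : G ≃g G) : Prop :=
  ∀ x y, G.Adj x y → ψ s(γ x, γ y) = ψ s(x, y)

/-- An edge labeling preserved only by the trivial automorphism. -/
def IsDistinguishingEdgeLabeling (G : SimpleGraph V) (ψ : Sym2 V → L) : Prop :=
  ∀ γ : G ≃g G, PreservesEdgeLabeling G ψ γ → ∀ x, γ x = x

theorem PreservesEdgeLabeling.symm {ψ : Sym2 V → L} {γ : G ≃g G}
    (h : PreservesEdgeLabeling G ψ γ) : PreservesEdgeLabeling G ψ γ.symm := by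
  intro x y hxy
  simpa using (h (γ.symm x) (γ.symm y) (γ.symm.map_adj_iff.2 hxy)).symm

theorem PreservesEdgeLabeling.trans {ψ : Sym2 V → L} {γ δ : G ≃g G}
    (hγ : PreservesEdgeLabeling G ψ γ) (hδ : PreservesEdgeLabeling G ψ δ) :
    PreservesEdgeLabeling G ψ (γ.trans δ) := fun x y hxy =>
  (hδ (γ x) (γ y) (γ.map_adj_iff.2 hxy)).trans (hγ x y hxy)

section Connectivity

variable {α : Type*} {S : Set (Sym2 V)} {a b x y : V}

theorem apply_eq_of_reachable {h : V → α} (hh : ∀ x y, G.Adj x y → h x = h y)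
    (hxy : G.Reachable x y) : h x = h y := by
  obtain ⟨w⟩ := hxy
  induction w with
  | nil => rfl
  | cons hadj _ ih => exact (hh _ _ hadj).trans ih

theorem reachable_deleteEdges_congr (hxy : G.Adj x y) (hS : s(x, y) ∉ S) :
    (G.deleteEdges S).Reachable a x ↔ (G.deleteEdges S).Reachable a y := by
  have hadj : (G.deleteEdges S).Adj x y := deleteEdges_adj.2 ⟨hxy, hS⟩
  exact ⟨fun h => h.trans hadj.reachable, fun h => h.trans hadj.symm.reachable⟩

theorem exists_adj_mem_notMem (hG : G.Connected) {B : Set V} (hne : B.Nonempty)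
    (huniv : B ≠ Set.univ) : ∃ b ∈ B, ∃ z ∉ B, G.Adj b z := by
  obtain ⟨b, hb⟩ := hne
  obtain ⟨z, hz⟩ := (Set.ne_univ_iff_exists_notMem B).1 huniv
  obtain ⟨w⟩ := hG.preconnected b z
  obtain ⟨d, -, hd, hd'⟩ := w.exists_boundary_dart B hb hz
  exact ⟨d.fst, hd, d.snd, hd', d.adj⟩

theorem apply_eq_of_mem_edges_of_isCycle {u : V} {w : G.Walk u u} (hw : w.IsCycle)
    (hab : s(a, b) ∈ w.edges) {h : V → α}
    (hh : ∀ x y, s(x, y) ∈ w.edges → s(x, y) ≠ s(a, b) → h x = h y) : h a = h b := by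
  have hmem : ∀ e ∈ w.edges, e ∈ (fromEdgeSet {e | e ∈ w.edges}).edgeSet := fun e he => by
    rw [edgeSet_fromEdgeSet]
    exact ⟨he, fun hd => G.not_isDiag_of_mem_edgeSet (w.edges_subset_edgeSet he) hd⟩
  have hbridge : ¬ (fromEdgeSet {e | e ∈ w.edges}).IsBridge s(a, b) := fun hbr =>
    (isBridge_iff_forall_cycle_notMem (hmem _ hab)).1 hbr _ (hw.transfer hmem)
      (by rwa [Walk.edges_transfer])
  rw [isBridge_iff, not_not] at hbridge
  refine apply_eq_of_reachable (fun x y hxy => ?_) hbridge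
  obtain ⟨hadj, hne⟩ := deleteEdges_adj.1 hxy
  exact hh x y ((fromEdgeSet_adj _).1 hadj).1 hne

theorem exists_isCycle_of_reachable_deleteEdges (hab : G.Adj a b) (habS : s(a, b) ∈ S)
    (h : (G.deleteEdges S).Reachable a b) :
    ∃ (u : V) (w : G.Walk u u), w.IsCycle ∧ s(a, b) ∈ w.edges ∧
      ∀ f ∈ w.edges, f ∈ S → f = s(a, b) := by
  obtain ⟨p, hp⟩ := h.symm.exists_isPath
  have hpS : ∀ f ∈ (p.mapLe (deleteEdges_le S)).edges, f ∉ S := fun f hf => by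
    rw [Walk.edges_mapLe_eq_edges] at hf
    exact (edgeSet_deleteEdges S ▸ p.edges_subset_edgeSet hf : f ∈ G.edgeSet \ S).2
  refine ⟨a, .cons hab (p.mapLe (deleteEdges_le S)), ?_, by simp, fun f hf hfS => ?_⟩
  · exact (Walk.cons_isCycle_iff _ hab).2 ⟨hp.mapLe _, fun h => hpS _ h habS⟩
  · rw [Walk.edges_cons, List.mem_cons] at hf
    exact hf.resolve_right fun h => hpS f h hfS

end Connectivity

section Cycles

variable {e f g : Sym2 V} {a b : V} {B : Set V}

/-- Two edges are cycle equivalent if they lie on exactly the same cycles. -/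
def CycleEquiv (G : SimpleGraph V) (e f : Sym2 V) : Prop :=
  ∀ (u : V) (w : G.Walk u u), w.IsCycle → (e ∈ w.edges ↔ f ∈ w.edges)

theorem CycleEquiv.refl (G : SimpleGraph V) (e : Sym2 V) : CycleEquiv G e e :=
  fun _ _ _ => Iff.rfl

theorem CycleEquiv.symm (h : CycleEquiv G e f) : CycleEquiv G f e :=
  fun u w hw => (h u w hw).symm

theorem CycleEquiv.trans (h : CycleEquiv G e f) (h' : CycleEquiv G f g) : CycleEquiv G e g :=
  fun u w hw => (h u w hw).trans (h' u w hw)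

theorem CycleEquiv.congr_left (h : CycleEquiv G e f) : CycleEquiv G e g ↔ CycleEquiv G f g :=
  ⟨h.symm.trans, h.trans⟩

theorem map_symm_map (γ : G ≃g G) (e : Sym2 V) : (e.map γ).map γ.symm = e := by
  induction e with | _ x y
  simp only [Sym2.map_mk, RelIso.symm_apply_apply]

theorem mk_apply_eq_iff (γ : G ≃g G) {x y : V} :
    s(γ x, γ y) = e ↔ s(x, y) = e.map γ.symm :=
  ⟨fun h => by rw [← h, ← Sym2.map_mk, map_symm_map],
    fun h => by rw [← Sym2.map_mk, h]; exact map_symm_map γ.symm e⟩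

theorem apply_eq_of_map_eq_self {γ : G ≃g G} {x y : V} (h : s(x, y).map γ = s(x, y))
    (hx : γ x ≠ x) : γ x = y :=
  ((Sym2.eq_iff.1 h).resolve_left fun h' => hx h'.1).1

theorem map_mem_edges_map {u v : V} (γ : G ≃g G) (w : G.Walk u v) :
    e.map γ ∈ (w.map γ.toHom).edges ↔ e ∈ w.edges := by
  rw [Walk.edges_map]
  exact List.mem_map_of_injective (Sym2.map.injective γ.injective)

theorem CycleEquiv.of_map (γ : G ≃g G) (h : CycleEquiv G (e.map γ) (f.map γ)) :
    CycleEquiv G e f := fun u w hw => by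
  rw [← map_mem_edges_map γ w, ← map_mem_edges_map (e := f) γ w]
  exact h _ _ (hw.map (f := γ.toHom) γ.injective)

theorem CycleEquiv.map (γ : G ≃g G) (h : CycleEquiv G e f) :
    CycleEquiv G (e.map γ) (f.map γ) :=
  CycleEquiv.of_map γ.symm (by rwa [map_symm_map, map_symm_map])

/-- The component of `b` in the graph obtained from `G` by deleting the cycle equivalence class
of `e`. -/
def cyclePiece (G : SimpleGraph V) (e : Sym2 V) (b : V) : Set V :=
  {x | (G.deleteEdges {f | CycleEquiv G e f}).Reachable b x}

/-- Some cycle of `G` runs inside `B`. -/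
def ContainsCycle (G : SimpleGraph V) (B : Set V) : Prop :=
  ∃ (u : V) (w : G.Walk u u), w.IsCycle ∧ ∀ x ∈ w.support, x ∈ B

/-- The edges of `G` joining `B` to its complement. -/
def edgeBoundary (G : SimpleGraph V) (B : Set V) : Set (Sym2 V) :=
  {e | ∃ b ∈ B, ∃ z ∉ B, G.Adj b z ∧ e = s(b, z)}

theorem mk_mem_edgeBoundary_iff {x y : V} (hxy : G.Adj x y) :
    s(x, y) ∈ edgeBoundary G B ↔ ¬(x ∈ B ↔ y ∈ B) := by
  constructor
  · rintro ⟨b, hb, z, hz, -, h⟩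
    rcases Sym2.eq_iff.1 h with ⟨rfl, rfl⟩ | ⟨rfl, rfl⟩ <;> tauto
  · intro h
    by_cases hx : x ∈ B
    · exact ⟨x, hx, y, by tauto, hxy, rfl⟩
    · exact ⟨y, by tauto, x, hx, hxy.symm, Sym2.eq_swap⟩

theorem ContainsCycle.mono {B' : Set V} (h : ContainsCycle G B) (hBB' : B ⊆ B') :
    ContainsCycle G B' := by
  obtain ⟨u, w, hw, hB⟩ := h
  exact ⟨u, w, hw, fun x hx => hBB' (hB x hx)⟩

theorem mem_cyclePiece_self (G : SimpleGraph V) (e : Sym2 V) (b : V) : b ∈ cyclePiece G e b :=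
  Reachable.refl b

theorem cyclePiece_eq_of_mem {b' : V} (h : b' ∈ cyclePiece G e b) :
    cyclePiece G e b' = cyclePiece G e b :=
  Set.ext fun _ => ⟨fun hx => Reachable.trans h hx, fun hx => (Reachable.symm h).trans hx⟩

theorem CycleEquiv.cyclePiece_eq (h : CycleEquiv G e f) : cyclePiece G e b = cyclePiece G f b := by
  simp only [cyclePiece, h.congr_left]

theorem mem_cyclePiece_iff_of_adj {x y : V} (hxy : G.Adj x y) (he : ¬ CycleEquiv G e s(x, y)) :
    x ∈ cyclePiece G e b ↔ y ∈ cyclePiece G e b :=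
  reachable_deleteEdges_congr hxy he

theorem CycleEquiv.of_mem_edgeBoundary (hf : f ∈ edgeBoundary G (cyclePiece G e b)) :
    CycleEquiv G e f := by
  obtain ⟨x, hx, y, hy, hxy, rfl⟩ := hf
  exact by_contra fun h => hy ((mem_cyclePiece_iff_of_adj hxy h).1 hx)

theorem cyclePiece_subset_cyclePiece
    (h : ∀ x y, x ∈ cyclePiece G e b → G.Adj x y → ¬ CycleEquiv G f s(x, y)) :
    cyclePiece G e b ⊆ cyclePiece G f b := fun x hx => by
  refine ((apply_eq_of_reachable (h := fun y => y ∈ cyclePiece G e b ∧ y ∈ cyclePiece G f b)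
    (fun p q hpq => propext ?_) hx).mp ⟨mem_cyclePiece_self G e b, mem_cyclePiece_self G f b⟩).2
  obtain ⟨hadj, hne⟩ := deleteEdges_adj.1 hpq
  rw [← mem_cyclePiece_iff_of_adj hadj hne]
  exact and_congr_right fun hp => mem_cyclePiece_iff_of_adj hadj (h p q hp hadj)

theorem support_subset_cyclePiece {u : V} {w : G.Walk u u} (hw : w.IsCycle) (he : e ∉ w.edges)
    {x : V} (hx : x ∈ w.support) : x ∈ cyclePiece G e u := by
  classical
  exact ⟨(w.takeUntil x hx).toDeleteEdges _ fun f hf hef =>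
    he ((hef u w hw).2 (w.edges_takeUntil_subset_edges hx hf))⟩

theorem cyclePiece_ne_univ (he : e ∈ G.edgeSet) (hef : CycleEquiv G e f) (hne : f ≠ e) :
    cyclePiece G e b ≠ Set.univ := by
  induction e with | _ x y
  intro huniv
  have hreach : (G.deleteEdges {f | CycleEquiv G s(x, y) f}).Reachable x y :=
    Reachable.trans (Reachable.symm (huniv ▸ Set.mem_univ x : x ∈ cyclePiece G s(x, y) b))
      (huniv ▸ Set.mem_univ y : y ∈ cyclePiece G s(x, y) b)
  obtain ⟨u, w, hw, hmem, huniq⟩ :=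
    exists_isCycle_of_reachable_deleteEdges he (CycleEquiv.refl G _) hreach
  exact hne (huniq f ((hef u w hw).1 hmem) hef)

theorem map_mem_cyclePiece (γ : G ≃g G) {x : V} (h : x ∈ cyclePiece G e b) :
    γ x ∈ cyclePiece G (e.map γ) (γ b) := by
  refine Reachable.map ⟨γ, fun {x y} hxy => ?_⟩ h
  obtain ⟨hadj, hne⟩ := deleteEdges_adj.1 hxy
  exact deleteEdges_adj.2 ⟨γ.map_adj_iff.2 hadj, fun h => hne (CycleEquiv.of_map γ h)⟩

theorem map_mem_cyclePiece_iff (γ : G ≃g G) {x : V} :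
    γ x ∈ cyclePiece G (e.map γ) (γ b) ↔ x ∈ cyclePiece G e b := by
  refine ⟨fun h => ?_, map_mem_cyclePiece γ⟩
  have hsymm := map_mem_cyclePiece γ.symm h
  rwa [map_symm_map, γ.symm_apply_apply, γ.symm_apply_apply] at hsymm

/-- The component of `z` outside `B`. -/
def outerComponent (G : SimpleGraph V) (B : Set V) (z : V) : Set V :=
  {x | (G.deleteEdges {e | ∃ v ∈ e, v ∈ B}).Reachable z x}

theorem notMem_of_mem_outerComponent {x z : V} (hz : z ∉ B) (hx : x ∈ outerComponent G B z) :
    x ∉ B := by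
  suffices h : (z ∈ B) = (x ∈ B) from h ▸ hz
  refine apply_eq_of_reachable (fun p q hpq => ?_) hx
  have hnot := (deleteEdges_adj.1 hpq).2
  have hp : p ∉ B := fun h => hnot ⟨p, Sym2.mem_mk_left p q, h⟩
  have hq : q ∉ B := fun h => hnot ⟨q, Sym2.mem_mk_right p q, h⟩
  simp only [hp, hq]

theorem mem_outerComponent_of_adj {x y z : V} (hx : x ∈ outerComponent G B z) (hxy : G.Adj x y)
    (hxB : x ∉ B) (hy : y ∉ B) : y ∈ outerComponent G B z :=
  (reachable_deleteEdges_congr hxy (by simp [hxB, hy])).1 hx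

theorem exists_return_edge {z u : V} {w : G.Walk u u} (hw : w.IsCycle) (hbz : s(b, z) ∈ w.edges)
    (hb : b ∈ B) (hz : z ∉ B) : ∃ q ∈ B, ∃ p ∈ outerComponent G B z, G.Adj q p ∧
      s(q, p) ≠ s(b, z) := by
  by_contra! hcon
  have hjump : ∀ x y, G.Adj x y → s(x, y) ≠ s(b, z) → x ∈ outerComponent G B z →
      y ∈ outerComponent G B z := fun x y hxy hne hx =>
    mem_outerComponent_of_adj hx hxy (notMem_of_mem_outerComponent hz hx) fun hy =>
      hne (Sym2.eq_swap.trans (hcon y hy x hx hxy.symm))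
  have hbX : b ∈ outerComponent G B z :=
    (apply_eq_of_mem_edges_of_isCycle (h := (· ∈ outerComponent G B z)) hw hbz
      fun x y hxy hne => propext
        ⟨hjump x y (w.edges_subset_edgeSet hxy) hne, hjump y x (w.edges_subset_edgeSet hxy).symm
          (by rwa [Sym2.eq_swap])⟩).mpr (Reachable.refl z)
  exact notMem_of_mem_outerComponent hz hbX hb

theorem exists_edgeBoundary_cyclePiece_eq_pair {b₀ z u : V} {w : G.Walk u u} (hw : w.IsCycle)
    (he : e ∈ w.edges) (hb : b ∈ cyclePiece G e b₀) (hz : z ∉ cyclePiece G e b₀)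
    (hbz : G.Adj b z) : ∃ f, edgeBoundary G (cyclePiece G e b₀) = {s(b, z), f} := by
  have hclass : ∀ {f}, f ∈ edgeBoundary G (cyclePiece G e b₀) → CycleEquiv G e f :=
    CycleEquiv.of_mem_edgeBoundary
  have hmem : s(b, z) ∈ edgeBoundary G (cyclePiece G e b₀) := ⟨b, hb, z, hz, hbz, rfl⟩
  obtain ⟨q, hq, p, hp, hqp, hne⟩ := exists_return_edge hw ((hclass hmem u w hw).1 he) hb hz
  have hf : s(q, p) ∈ edgeBoundary G (cyclePiece G e b₀) :=
    ⟨q, hq, p, notMem_of_mem_outerComponent hz hp, hqp, rfl⟩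
  refine ⟨s(q, p), Set.Subset.antisymm ?_ (Set.insert_subset hmem (Set.singleton_subset_iff.2 hf))⟩
  by_contra hcon
  obtain ⟨g, hg, hg'⟩ := Set.not_subset.1 hcon
  rw [Set.mem_insert_iff, Set.mem_singleton_iff, not_or] at hg'
  have hzp : (G.deleteEdges {s(b, z), g}).Reachable z p := by
    refine hp.mono (deleteEdges_anti ?_)
    rintro _ (rfl | rfl)
    · exact ⟨b, Sym2.mem_mk_left b z, hb⟩
    · obtain ⟨v, hv, y, -, -, rfl⟩ := hg
      exact ⟨v, Sym2.mem_mk_left v y, hv⟩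
  have hpq : (G.deleteEdges {s(b, z), g}).Reachable p q :=
    Adj.reachable (Adj.symm (deleteEdges_adj.2 ⟨hqp, by simp [hne, Ne.symm hg'.2]⟩))
  have hqb : (G.deleteEdges {s(b, z), g}).Reachable q b := by
    refine ((Reachable.symm hq).trans hb).mono (deleteEdges_anti ?_)
    rintro _ (rfl | rfl)
    exacts [hclass hmem, hclass hg]
  obtain ⟨u', w', hw', hbzw', huniq⟩ := exists_isCycle_of_reachable_deleteEdges hbz
    (Set.mem_insert _ _) ((hzp.trans hpq).trans hqb).symm
  exact hg'.1 (huniq g (((hclass hmem).symm.trans (hclass hg) u' w' hw').1 hbzw') (by simp))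

theorem CycleEquiv.of_jumps {α : Type*} {h : V → α}
    (hh : ∀ x y, G.Adj x y → (h x ≠ h y ↔ s(x, y) = e ∨ s(x, y) = f)) : CycleEquiv G e f := by
  suffices hmem : ∀ e f : Sym2 V, (∀ x y, G.Adj x y → (h x ≠ h y ↔ s(x, y) = e ∨ s(x, y) = f)) →
      ∀ (u : V) (w : G.Walk u u), w.IsCycle → e ∈ w.edges → f ∈ w.edges from
    fun u w hw => ⟨hmem e f hh u w hw, hmem f e (by simpa only [or_comm] using hh) u w hw⟩
  intro e f hh u w hw he
  induction e with | _ a b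
  by_contra hf
  refine (hh a b (w.edges_subset_edgeSet he)).2 (Or.inl rfl)
    (apply_eq_of_mem_edges_of_isCycle hw he fun x y hxy hne => ?_)
  by_contra hjump
  rcases (hh x y (w.edges_subset_edgeSet hxy)).1 hjump with h | rfl
  exacts [hne h, hf hxy]

theorem edges_subset_of_forall_mem_edges {u v : V} {w : G.Walk u u} {w' : G.Walk v v}
    (h : ∀ (u : V) (w : G.Walk u u), w.IsCycle → f ∈ w.edges) (hw : w.IsCycle)
    (hw' : w'.IsCycle) : w.edges ⊆ w'.edges := by
  intro e he
  by_contra he'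
  induction e with | _ a b
  induction f with | _ p q
  have hsame : ∀ x y, G.Adj x y → s(x, y) ∉ ({s(a, b), s(p, q)} : Set (Sym2 V)) →
      ((G.deleteEdges {s(a, b), s(p, q)}).Reachable a x) =
        (G.deleteEdges {s(a, b), s(p, q)}).Reachable a y := fun x y hxy hS =>
    propext (reachable_deleteEdges_congr hxy hS)
  have hpq := apply_eq_of_mem_edges_of_isCycle hw' (h v w' hw') fun x y hxy hne =>
    hsame x y (w'.edges_subset_edgeSet hxy) (by rintro (h | h); exacts [he' (h ▸ hxy), hne h])
  have hab := apply_eq_of_mem_edges_of_isCycle hw he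
    (h := (G.deleteEdges {s(a, b), s(p, q)}).Reachable a) fun x y hxy hne => by
      by_cases hxyf : s(x, y) = s(p, q)
      · rcases Sym2.eq_iff.1 hxyf with ⟨rfl, rfl⟩ | ⟨rfl, rfl⟩
        exacts [hpq, hpq.symm]
      · exact hsame x y (w.edges_subset_edgeSet hxy) (by simp [hne, hxyf])
  obtain ⟨u', w'', hw'', -, huniq⟩ := exists_isCycle_of_reachable_deleteEdges
    (w.edges_subset_edgeSet he) (Set.mem_insert _ _) (hab.mp (Reachable.refl a))
  exact he' (huniq _ (h u' w'' hw'') (by simp) ▸ h v w' hw')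

/-- A piece of `G` containing a cycle, cut off along the cycle equivalence class of an edge `e`
that lies on a cycle and is not alone in its class. -/
structure IsHeavyPiece (G : SimpleGraph V) (e : Sym2 V) (b : V) : Prop where
  exists_cycle : ∃ (u : V) (w : G.Walk u u), w.IsCycle ∧ e ∈ w.edges
  exists_cycleEquiv : ∃ f ≠ e, CycleEquiv G e f
  containsCycle : ContainsCycle G (cyclePiece G e b)

theorem IsHeavyPiece.exists_boundary_adj (hG : G.Connected) (h : IsHeavyPiece G e b) :
    ∃ b' ∈ cyclePiece G e b, ∃ z ∉ cyclePiece G e b, G.Adj b' z := by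
  obtain ⟨u, w, -, he⟩ := h.exists_cycle
  obtain ⟨f, hne, hef⟩ := h.exists_cycleEquiv
  exact exists_adj_mem_notMem hG ⟨b, mem_cyclePiece_self G e b⟩
    (cyclePiece_ne_univ (w.edges_subset_edgeSet he) hef hne)

theorem exists_maximal_heavyPiece [Finite V] (hcyc : ¬ G.IsAcyclic)
    (hclass : ∀ (u : V) (w : G.Walk u u), w.IsCycle → ∃ e ∈ w.edges, ∃ f ≠ e, CycleEquiv G e f)
    (havoid : ∀ e : Sym2 V, ∃ (u : V) (w : G.Walk u u), w.IsCycle ∧ e ∉ w.edges) :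
    ∃ e b, IsHeavyPiece G e b ∧ ∀ e' b', IsHeavyPiece G e' b' →
      cyclePiece G e b ⊆ cyclePiece G e' b' → cyclePiece G e' b' ⊆ cyclePiece G e b := by
  obtain ⟨u, w, hw⟩ : ∃ (u : V) (w : G.Walk u u), w.IsCycle := by simpa [IsAcyclic] using hcyc
  obtain ⟨e, he, hef⟩ := hclass u w hw
  obtain ⟨u', w', hw', he'⟩ := havoid e
  obtain ⟨_, ⟨e₀, b₀, h₀, rfl⟩, hmax⟩ :=
    {B | ∃ e b, IsHeavyPiece G e b ∧ B = cyclePiece G e b}.toFinite.exists_maximal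
      ⟨_, e, u', ⟨⟨u, w, hw, he⟩, hef, u', w', hw', fun _ => support_subset_cyclePiece hw' he'⟩,
        rfl⟩
  exact ⟨e₀, b₀, h₀, fun e' b' h' hsub => hmax ⟨e', b', h', rfl⟩ hsub⟩

/-- If another piece contained a cycle, then cutting along a class inside that cycle would leave a
piece that contains the maximal one and an edge of its boundary. -/
theorem IsHeavyPiece.mem_cyclePiece_of_containsCycle (hG : G.Connected)
    (hclass : ∀ (u : V) (w : G.Walk u u), w.IsCycle → ∃ e ∈ w.edges, ∃ f ≠ e, CycleEquiv G e f)
    (h : IsHeavyPiece G e b)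
    (hmax : ∀ e' b', IsHeavyPiece G e' b' →
      cyclePiece G e b ⊆ cyclePiece G e' b' → cyclePiece G e' b' ⊆ cyclePiece G e b)
    {b' : V} (hb' : ContainsCycle G (cyclePiece G e b')) : b' ∈ cyclePiece G e b := by
  by_contra hnot
  obtain ⟨u, w, hw, hsupp⟩ := hb'
  obtain ⟨e', he', hf'⟩ := hclass u w hw
  have hsep : ∀ x y, x ∈ cyclePiece G e b → G.Adj x y → ¬ CycleEquiv G e' s(x, y) :=
    fun x y hx _ he'xy => by
      have hx' := hsupp x (w.fst_mem_support_of_mem_edges ((he'xy u w hw).1 he'))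
      exact hnot (Reachable.trans hx (Reachable.symm hx'))
  have hsub : cyclePiece G e b ⊆ cyclePiece G e' b := cyclePiece_subset_cyclePiece hsep
  obtain ⟨x, hx, z, hz, hxz⟩ := h.exists_boundary_adj hG
  have hz' : z ∈ cyclePiece G e' b := (mem_cyclePiece_iff_of_adj hxz (hsep x z hx hxz)).1 (hsub hx)
  exact hz (hmax e' b ⟨⟨u, w, hw, he'⟩, hf', h.containsCycle.mono hsub⟩ hsub hz')

theorem ContainsCycle.map_cyclePiece (γ : G ≃g G) (h : ContainsCycle G (cyclePiece G e b)) :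
    ContainsCycle G (cyclePiece G (e.map γ) (γ b)) := by
  obtain ⟨u, w, hw, hsupp⟩ := h
  refine ⟨γ u, w.map γ.toHom, hw.map γ.injective, fun x hx => ?_⟩
  rw [Walk.support_map] at hx
  obtain ⟨y, hy, rfl⟩ := List.mem_map.1 hx
  exact map_mem_cyclePiece γ (hsupp y hy)

/-- The set `B` has at most the two boundary edges `s(b, z)` and `f`, and it is preserved by every
automorphism that moves `s(b, z)` within its cycle equivalence class. -/
structure IsInvariantPiece (G : SimpleGraph V) (B : Set V) (b z : V) (f : Sym2 V) : Prop where
  mem : b ∈ B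
  notMem : z ∉ B
  adj : G.Adj b z
  edgeBoundary_eq : edgeBoundary G B = {s(b, z), f}
  apply_mem_iff : ∀ γ : G ≃g G, CycleEquiv G s(b, z) (s(b, z).map γ) → ∀ x, γ x ∈ B ↔ x ∈ B

theorem exists_isInvariantPiece [Finite V] (hG : G.Connected) (hcyc : ¬ G.IsAcyclic)
    (hclass : ∀ (u : V) (w : G.Walk u u), w.IsCycle → ∃ e ∈ w.edges, ∃ f ≠ e, CycleEquiv G e f)
    (havoid : ∀ e : Sym2 V, ∃ (u : V) (w : G.Walk u u), w.IsCycle ∧ e ∉ w.edges) :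
    ∃ B b z f, IsInvariantPiece G B b z f := by
  obtain ⟨e, b₀, h, hmax⟩ := exists_maximal_heavyPiece hcyc hclass havoid
  obtain ⟨b, hb, z, hz, hbz⟩ := h.exists_boundary_adj hG
  obtain ⟨u, w, hw, he⟩ := h.exists_cycle
  obtain ⟨f, hf⟩ := exists_edgeBoundary_cyclePiece_eq_pair hw he hb hz hbz
  refine ⟨cyclePiece G e b₀, b, z, f, hb, hz, hbz, hf, fun γ hγ x => ?_⟩
  have hebz : CycleEquiv G e s(b, z) := CycleEquiv.of_mem_edgeBoundary ⟨b, hb, z, hz, hbz, rfl⟩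
  have hpiece : cyclePiece G (e.map γ) (γ b₀) = cyclePiece G e (γ b₀) :=
    (hebz.trans (hγ.trans (hebz.symm.map γ))).symm.cyclePiece_eq
  have hγb₀ : γ b₀ ∈ cyclePiece G e b₀ := h.mem_cyclePiece_of_containsCycle hG hclass hmax
    (hpiece ▸ h.containsCycle.map_cyclePiece γ)
  have hinv : cyclePiece G (e.map γ) (γ b₀) = cyclePiece G e b₀ :=
    hpiece.trans (cyclePiece_eq_of_mem hγb₀)
  simpa only [hinv] using map_mem_cyclePiece_iff (e := e) (b := b₀) γ (x := x)

theorem IsInvariantPiece.fixes_or_map_eq {z : V} (h : IsInvariantPiece G B b z f) {γ : G ≃g G}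
    (hγ : CycleEquiv G s(b, z) (s(b, z).map γ)) :
    (γ b = b ∧ γ z = z) ∨ (s(b, z).map γ = f ∧ f ≠ s(b, z)) := by
  have hb : γ b ∈ B := (h.apply_mem_iff γ hγ b).2 h.mem
  have hz : γ z ∉ B := (h.apply_mem_iff γ hγ z).not.2 h.notMem
  have hmem : s(b, z).map γ ∈ edgeBoundary G B := ⟨γ b, hb, γ z, hz, γ.map_adj_iff.2 h.adj, rfl⟩
  rw [h.edgeBoundary_eq, Set.mem_insert_iff, Set.mem_singleton_iff] at hmem
  by_cases hfix : s(b, z).map γ = s(b, z)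
  · exact .inl ((Sym2.eq_iff.1 hfix).resolve_right fun h' => h.notMem (h'.1 ▸ hb))
  · exact .inr ⟨hmem.resolve_left hfix, fun hf => hfix (hmem.elim id hf.subst)⟩

end Cycles

section EdgeSum

/-- The edge labeling that adds up the labels of the two ends. -/
def edgeSum {F : Type*} [AddCommMonoid F] (c : V → F) : Sym2 V → F :=
  Sym2.lift ⟨fun x y => c x + c y, fun x y => add_comm (c x) (c y)⟩

@[simp]
theorem edgeSum_mk {F : Type*} [AddCommMonoid F] (c : V → F) (x y : V) :
    edgeSum c s(x, y) = c x + c y := rfl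

section AddCommGroup

variable {F : Type*} [AddCommGroup F] {c : V → F} {μ ν : G ≃g G} {a : V}

theorem apply_eq_of_preserves_edgeSum (hG : G.Connected)
    (hμ : PreservesEdgeLabeling G (edgeSum c) μ) (hν : PreservesEdgeLabeling G (edgeSum c) ν)
    (ha : c (μ a) = c (ν a)) (x : V) : c (μ x) = c (ν x) := by
  refine (apply_eq_of_reachable (h := fun x => c (μ x) = c (ν x)) (fun x y hxy => propext ?_)
    (hG.preconnected a x)).mp ha
  have hsum : c (μ x) + c (μ y) = c (ν x) + c (ν y) := (hμ x y hxy).trans (hν x y hxy).symm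
  constructor <;> intro h <;> simpa [h] using hsum

theorem IsDistinguishingVertexLabeling.eq_of_preserves_edgeSum
    (hc : IsDistinguishingVertexLabeling G c) (hG : G.Connected)
    (hμ : PreservesEdgeLabeling G (edgeSum c) μ) (hν : PreservesEdgeLabeling G (edgeSum c) ν)
    (ha : c (μ a) = c (ν a)) (x : V) : μ x = ν x := by
  have h := hc (ν.symm.trans μ)
    (fun y => by simp [apply_eq_of_preserves_edgeSum hG hμ hν ha]) (ν x)
  simpa using h

theorem IsDistinguishingVertexLabeling.eq_self_of_preserves_edgeSum
    (hc : IsDistinguishingVertexLabeling G c) (hG : G.Connected)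
    (hμ : PreservesEdgeLabeling G (edgeSum c) μ) (ha : c (μ a) = c a) (x : V) : μ x = x :=
  hc.eq_of_preserves_edgeSum hG (ν := RelIso.refl _) hμ (fun _ _ _ => rfl) ha x

theorem PreservesEdgeLabeling.of_add_single [DecidableEq V] {ψ : Sym2 V → F} {e : Sym2 V} {s : F}
    {γ : G ≃g G} (h : PreservesEdgeLabeling G (ψ + Pi.single e s) γ) (he : e.map γ.symm = e) :
    PreservesEdgeLabeling G ψ γ := fun x y hxy => by
  have hxy' := h x y hxy
  simpa only [Pi.add_apply, Pi.single_apply, mk_apply_eq_iff, he, add_left_inj] using hxy'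

end AddCommGroup

section CommRing

variable {F : Type*} [CommRing F] {c : V → F}

theorem exists_alternating_of_not_isDistinguishingEdgeLabeling
    (hc : IsDistinguishingVertexLabeling G c) (hG : G.Connected)
    (h : ¬ IsDistinguishingEdgeLabeling G (edgeSum c)) :
    ∃ σ : V → F, (∀ x, σ x ≠ 0) ∧ ∀ x y, G.Adj x y → σ x = -σ y := by
  simp only [IsDistinguishingEdgeLabeling, not_forall] at h
  obtain ⟨γ, hγ, y, hy⟩ := h
  refine ⟨fun x => c (γ x) - c x, fun x hx => hy ?_, fun x y hxy => ?_⟩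
  · exact hc.eq_self_of_preserves_edgeSum hG hγ (sub_eq_zero.1 hx) y
  · have hsum : c (γ x) + c (γ y) = c x + c y := hγ x y hxy
    linear_combination hsum

/-- The two edges of the cycle at its base point cannot both be fixed: `γ` and `δ` swapping their
ends would change the label of the base point by amounts `a` and `b`, so that `γ = δ` or
`δ ∘ γ = γ`. -/
theorem exists_edge_mem_cycle_forall_fixed (hc : IsDistinguishingVertexLabeling G c)
    (hG : G.Connected) (hF : ∀ a b : F, a ≠ 0 → b ≠ 0 → b = a ∨ b = a + a) {u : V}
    {w : G.Walk u u} (hw : w.IsCycle) :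
    ∃ e ∈ w.edges, ∀ γ : G ≃g G, PreservesEdgeLabeling G (edgeSum c) γ → e.map γ = e →
      ∀ x, γ x = x := by
  by_contra! hcon
  have hsnd := w.mk_start_snd_mem_edges hw.not_nil
  have hpen := Sym2.eq_swap ▸ w.mk_penultimate_end_mem_edges hw.not_nil
  obtain ⟨γ, hγ, hfixγ, x, hx⟩ := hcon _ hsnd
  obtain ⟨δ, hδ, hfixδ, y, hy⟩ := hcon _ hpen
  have hγu : c (γ u) ≠ c u := fun h => hx (hc.eq_self_of_preserves_edgeSum hG hγ h x)
  have hδu : c (δ u) ≠ c u := fun h => hy (hc.eq_self_of_preserves_edgeSum hG hδ h y)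
  have hγu' := apply_eq_of_map_eq_self hfixγ fun h => hγu (by rw [h])
  have hδu' := apply_eq_of_map_eq_self hfixδ fun h => hδu (by rw [h])
  rcases hF _ _ (sub_ne_zero.2 hγu) (sub_ne_zero.2 hδu) with h | h
  · have hγδ : γ u = δ u :=
      hc.eq_of_preserves_edgeSum hG (a := u) hγ hδ (by linear_combination -h) u
    exact hw.snd_ne_penultimate (hγu'.symm.trans (hγδ.trans hδu'))
  · have hsum : c (γ u) + c (γ (δ u)) = c u + c (δ u) :=
      hδu' ▸ hγ u w.penultimate (w.edges_subset_edgeSet hpen)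
    have hγδ : γ (δ u) = γ u := hc.eq_of_preserves_edgeSum hG (a := u) (hδ.trans hγ) hγ
      (by rw [RelIso.trans_apply]; linear_combination hsum + h) u
    exact hδu (by rw [γ.injective hγδ])

end CommRing

/-- Divided by `σ`, the change `c ∘ γ - c` jumps exactly at the edges `e` and `γ⁻¹ e`. -/
theorem cycleEquiv_map_symm_of_preserves [DecidableEq V] {F : Type*} [Field F] {c σ : V → F}
    {e : Sym2 V} {s : F} {γ : G ≃g G}
    (hσ₀ : ∀ x, σ x ≠ 0) (hσ : ∀ x y, G.Adj x y → σ x = -σ y) (hs : s ≠ 0)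
    (hγ : PreservesEdgeLabeling G (edgeSum c + Pi.single e s) γ) :
    CycleEquiv G e (e.map γ.symm) := by
  by_cases hfix : e.map γ.symm = e
  · exact hfix.symm ▸ CycleEquiv.refl G e
  refine CycleEquiv.of_jumps (h := fun x => (c (γ x) - c x) / σ x) fun x y hxy => ?_
  have hsum := hγ x y hxy
  simp only [Pi.add_apply, Pi.single_apply, edgeSum_mk, mk_apply_eq_iff] at hsum
  have hjump : (c (γ x) - c x) / σ x = (c (γ y) - c y) / σ y ↔
      (if s(x, y) = e then s else 0) = if s(x, y) = e.map γ.symm then s else 0 := by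
    rw [hσ x y hxy, div_neg, neg_eq_iff_add_eq_zero, ← add_div, div_eq_zero_iff,
      or_iff_left (hσ₀ y), ← sub_eq_zero (a := ite _ _ _)]
    exact ⟨fun h => by linear_combination h - hsum, fun h => by linear_combination h + hsum⟩
  rw [Ne, hjump]
  by_cases h₁ : s(x, y) = e <;> by_cases h₂ : s(x, y) = e.map γ.symm
  · exact absurd (h₂.symm.trans h₁) hfix
  all_goals simp [h₁, h₂, hs, hs.symm, hfix, Ne.symm hfix]

end EdgeSum

section TwoAndThreeLabels

variable {F : Type*} [Field F] {c : V → F} {σ : V → F} {B : Set V} {b z : V} {f : Sym2 V}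

theorem exists_isDistinguishingEdgeLabeling_of_cycleEquiv_trivial
    (hc : IsDistinguishingVertexLabeling G c) (hG : G.Connected)
    (hF : ∀ a b : F, a ≠ 0 → b ≠ 0 → b = a ∨ b = a + a)
    (hσ₀ : ∀ x, σ x ≠ 0) (hσ : ∀ x y, G.Adj x y → σ x = -σ y) {u : V} {w : G.Walk u u}
    (hw : w.IsCycle) (htriv : ∀ e ∈ w.edges, ∀ f, CycleEquiv G e f → f = e) :
    ∃ ψ : Sym2 V → F, IsDistinguishingEdgeLabeling G ψ := by
  classical
  obtain ⟨e, he, hfree⟩ := exists_edge_mem_cycle_forall_fixed hc hG hF hw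
  refine ⟨edgeSum c + Pi.single e 1, fun γ hγ => ?_⟩
  have hfix : e.map γ.symm = e :=
    htriv e he _ (cycleEquiv_map_symm_of_preserves hσ₀ hσ one_ne_zero hγ)
  refine hfree γ (hγ.of_add_single hfix) ?_
  conv_lhs => rw [← hfix]
  exact map_symm_map γ.symm e

theorem IsInvariantPiece.exists_isDistinguishingEdgeLabeling (hB : IsInvariantPiece G B b z f)
    (hc : IsDistinguishingVertexLabeling G c) (hG : G.Connected)
    (hF : ∀ a : F, ∃ s ≠ 0, s ≠ a)
    (hσ₀ : ∀ x, σ x ≠ 0) (hσ : ∀ x y, G.Adj x y → σ x = -σ y) :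
    ∃ ψ : Sym2 V → F, IsDistinguishingEdgeLabeling G ψ := by
  classical
  obtain ⟨s, hs₀, hs⟩ := hF (edgeSum c f - edgeSum c s(b, z))
  refine ⟨edgeSum c + Pi.single s(b, z) s, fun γ hγ => ?_⟩
  rcases hB.fixes_or_map_eq (cycleEquiv_map_symm_of_preserves hσ₀ hσ hs₀ hγ) with
    ⟨hb, hz⟩ | ⟨hmap, hne⟩
  · refine hc.eq_self_of_preserves_edgeSum hG (hγ.of_add_single ?_) (a := b) ?_
    · rw [Sym2.map_mk, hb, hz]
    · rw [← γ.symm_apply_eq.1 hb]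
  · have hlabel : edgeSum c f = edgeSum c s(b, z) + s := by
      simpa [← Sym2.map_mk, hmap, hne] using hγ.symm b z hB.adj
    exact absurd (by rw [hlabel, add_sub_cancel_left]) hs

/-- The number of labels `0` minus the number of labels `1` on `S`. -/
def imbalance (c : V → ZMod 2) (S : Finset V) : ℤ :=
  ∑ x ∈ S, if c x = 0 then 1 else -1

theorem imbalance_congr {c c' : V → ZMod 2} {S : Finset V} (h : ∀ x ∈ S, c x = c' x) :
    imbalance c S = imbalance c' S :=
  Finset.sum_congr rfl fun x hx => by rw [h x hx]

theorem imbalance_eq_zero_of_flip {c : V → ZMod 2} {S : Finset V} (γ : Equiv.Perm V)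
    (hS : ∀ x, γ x ∈ S ↔ x ∈ S) (hflip : ∀ x ∈ S, c (γ x) + c x = 1) : imbalance c S = 0 := by
  have hflip' : ∀ a b : ZMod 2, a + b = 1 →
      (if a = 0 then 1 else -1 : ℤ) = -(if b = 0 then 1 else -1) := by decide
  have hneg : imbalance c S = -imbalance c S := by
    calc imbalance c S = ∑ x ∈ S, if c (γ x) = 0 then 1 else -1 :=
          (Finset.sum_equiv γ (fun x => (hS x).symm) fun _ _ => rfl).symm
      _ = -imbalance c S := by
          rw [imbalance, ← Finset.sum_neg_distrib]
          exact Finset.sum_congr rfl fun x hx => hflip' _ _ (hflip x hx)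
  lia

theorem exists_imbalance_update_ne_zero [DecidableEq V] (c : V → ZMod 2) {S : Finset V}
    (hb : b ∈ S) : ∃ β, imbalance (Function.update c b β) S ≠ 0 := by
  have hsplit : ∀ β, imbalance (Function.update c b β) S =
      (if β = 0 then 1 else -1) + imbalance c (S.erase b) := fun β => by
    rw [imbalance, ← Finset.add_sum_erase S _ hb, Function.update_self]
    exact congrArg _ (imbalance_congr fun x hx =>
      Function.update_of_ne (Finset.ne_of_mem_erase hx) _ _)
  by_contra! h
  have h₀ := hsplit 0 ▸ h 0
  have h₁ := hsplit 1 ▸ h 1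
  simp only [if_true, one_ne_zero, if_false] at h₀ h₁
  lia

theorem exists_update_imbalance_ne_zero [Fintype V] [DecidableEq V] (c : V → ZMod 2)
    {S : Finset V} (hb : b ∈ S) (hz : z ∉ S) :
    ∃ c' : V → ZMod 2, (∀ x, x ≠ b → x ≠ z → c' x = c x) ∧ imbalance c' S ≠ 0 ∧
      imbalance c' Sᶜ ≠ 0 := by
  obtain ⟨β, hβ⟩ := exists_imbalance_update_ne_zero c hb
  obtain ⟨ζ, hζ⟩ := exists_imbalance_update_ne_zero (Function.update c b β) (Finset.mem_compl.2 hz)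
  refine ⟨Function.update (Function.update c b β) z ζ, fun x hxb hxz => ?_, ?_, hζ⟩
  · rw [Function.update_of_ne hxz, Function.update_of_ne hxb]
  · rwa [imbalance_congr fun x hx => Function.update_of_ne (ne_of_mem_of_not_mem hx hz) _ _]

/-- The change `c ∘ γ - c` jumps exactly at the boundary of `S`, so `γ` flips the labels on `S` or
on its complement. -/
theorem imbalance_eq_zero_or_compl [Fintype V] [DecidableEq V] (hG : G.Connected)
    {c : V → ZMod 2} {S : Finset V} {e : Sym2 V} (hbd : edgeBoundary G S = {e, f}) (hne : f ≠ e)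
    {γ : G ≃g G} (hγ : PreservesEdgeLabeling G (edgeSum c + Pi.single e 1) γ)
    (hmap : e.map γ.symm = f) (hS : ∀ x, γ x ∈ S ↔ x ∈ S) :
    imbalance c S = 0 ∨ imbalance c Sᶜ = 0 := by
  have hboundary : ∀ x y, G.Adj x y →
      (if s(x, y) = e then 1 else 0) + (if s(x, y) = f then 1 else 0) =
        ((if x ∈ S then 1 else 0) + if y ∈ S then 1 else 0 : ZMod 2) := fun x y hxy => by
    have hmem := mk_mem_edgeBoundary_iff (B := (S : Set V)) hxy
    rw [hbd, Set.mem_insert_iff, Set.mem_singleton_iff, Finset.mem_coe, Finset.mem_coe] at hmem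
    have hone : (1 + 1 : ZMod 2) = 0 := by decide
    by_cases hx : x ∈ S <;> by_cases hy : y ∈ S <;> by_cases he : s(x, y) = e <;>
      by_cases hf : s(x, y) = f <;> simp_all
  have hstep : ∀ x y, G.Adj x y → c (γ x) + c x + (if x ∈ S then 1 else 0) =
      c (γ y) + c y + if y ∈ S then 1 else 0 := fun x y hxy => by
    have hsum := hγ x y hxy
    simp only [Pi.add_apply, Pi.single_apply, edgeSum_mk, mk_apply_eq_iff, hmap] at hsum
    have htwo : (2 : ZMod 2) = 0 := by decide
    linear_combination hsum - hboundary x y hxy + (c x - c (γ y) - (if y ∈ S then 1 else 0) +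
      if s(x, y) = e then 1 else 0) * htwo
  obtain ⟨x₀⟩ := hG.nonempty
  have hconst : ∀ x, c (γ x) + c x + (if x ∈ S then 1 else 0) =
      c (γ x₀) + c x₀ + if x₀ ∈ S then 1 else 0 := fun x =>
    apply_eq_of_reachable (h := fun x => c (γ x) + c x + if x ∈ S then 1 else 0) hstep
      (hG.preconnected x x₀)
  generalize c (γ x₀) + c x₀ + (if x₀ ∈ S then 1 else 0) = κ at hconst
  have hcases : ∀ a κ : ZMod 2, (κ = 0 → a + 1 = κ → a = 1) ∧ (κ ≠ 0 → a + 0 = κ → a = 1) := by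
    decide
  by_cases hκ : κ = 0
  · refine .inl (imbalance_eq_zero_of_flip γ.toEquiv hS fun x hx => (hcases _ κ).1 hκ ?_)
    simpa only [if_pos hx, RelIso.coe_fn_toEquiv] using hconst x
  · refine .inr (imbalance_eq_zero_of_flip γ.toEquiv
      (fun x => by simpa only [Finset.mem_compl, RelIso.coe_fn_toEquiv] using (hS x).not)
      fun x hx => (hcases _ κ).2 hκ ?_)
    simpa only [if_neg (Finset.mem_compl.1 hx), RelIso.coe_fn_toEquiv] using hconst x

theorem IsInvariantPiece.exists_isDistinguishingEdgeLabeling_two [Finite V] {c : V → ZMod 2}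
    {σ : V → ZMod 2} (hB : IsInvariantPiece G B b z f) (hc : IsDistinguishingVertexLabeling G c)
    (hG : G.Connected) (hσ₀ : ∀ x, σ x ≠ 0) (hσ : ∀ x y, G.Adj x y → σ x = -σ y) :
    ∃ ψ : Sym2 V → ZMod 2, IsDistinguishingEdgeLabeling G ψ := by
  have := Fintype.ofFinite V
  classical
  obtain ⟨c', hc', hbal, hbal'⟩ := exists_update_imbalance_ne_zero c
    (Set.mem_toFinset.2 hB.mem) (Set.mem_toFinset.not.2 hB.notMem)
  refine ⟨edgeSum c' + Pi.single s(b, z) 1, fun γ hγ => ?_⟩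
  have hequiv := cycleEquiv_map_symm_of_preserves hσ₀ hσ one_ne_zero hγ
  rcases hB.fixes_or_map_eq hequiv with ⟨hb, hz⟩ | ⟨hmap, hne⟩
  · have hsum := hγ.of_add_single (by rw [Sym2.map_mk, hb, hz])
    rw [γ.symm_apply_eq, eq_comm] at hb hz
    have hγc' := apply_eq_of_preserves_edgeSum hG (ν := RelIso.refl _) (a := b) hsum
      (fun _ _ _ => rfl) (congrArg c' hb)
    refine hc γ fun x => ?_
    by_cases hxb : x = b
    · rw [hxb, hb]
    by_cases hxz : x = z
    · rw [hxz, hz]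
    rw [← hc' x hxb hxz, ← hc' (γ x) (fun h => hxb (γ.injective (h.trans hb.symm)))
      fun h => hxz (γ.injective (h.trans hz.symm))]
    exact hγc' x
  · have hinv : ∀ x, γ x ∈ B.toFinset ↔ x ∈ B.toFinset := fun x => by
      rw [Set.mem_toFinset, Set.mem_toFinset, ← hB.apply_mem_iff γ.symm hequiv,
        γ.symm_apply_apply]
    rcases imbalance_eq_zero_or_compl hG (by rw [Set.coe_toFinset, hB.edgeBoundary_eq]) hne hγ
      hmap hinv with h | h
    exacts [absurd h hbal, absurd h hbal']

theorem exists_isDistinguishingEdgeLabeling_of_forall_isInvariantPiece [Finite V]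
    (hc : IsDistinguishingVertexLabeling G c) (hG : G.Connected) (hcyc : ¬ G.IsAcyclic)
    (hF : ∀ a b : F, a ≠ 0 → b ≠ 0 → b = a ∨ b = a + a)
    (havoid : ∀ e : Sym2 V, ∃ (u : V) (w : G.Walk u u), w.IsCycle ∧ e ∉ w.edges)
    (hpiece : ∀ (σ : V → F) (B : Set V) (b z : V) (f : Sym2 V), (∀ x, σ x ≠ 0) →
      (∀ x y, G.Adj x y → σ x = -σ y) → IsInvariantPiece G B b z f →
      ∃ ψ : Sym2 V → F, IsDistinguishingEdgeLabeling G ψ) :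
    ∃ ψ : Sym2 V → F, IsDistinguishingEdgeLabeling G ψ := by
  by_cases hsum : IsDistinguishingEdgeLabeling G (edgeSum c)
  · exact ⟨_, hsum⟩
  obtain ⟨σ, hσ₀, hσ⟩ := exists_alternating_of_not_isDistinguishingEdgeLabeling hc hG hsum
  by_cases hclass : ∀ (u : V) (w : G.Walk u u), w.IsCycle →
      ∃ e ∈ w.edges, ∃ f ≠ e, CycleEquiv G e f
  · obtain ⟨B, b, z, f, hB⟩ := exists_isInvariantPiece hG hcyc hclass havoid
    exact hpiece σ B b z f hσ₀ hσ hB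
  · push Not at hclass
    obtain ⟨u, w, hw, htriv⟩ := hclass
    exact exists_isDistinguishingEdgeLabeling_of_cycleEquiv_trivial hc hG hF hσ₀ hσ hw
      fun e he f hef => by_contra fun hfe => htriv e he f hfe hef

theorem exists_isDistinguishingEdgeLabeling_zmod_two [Finite V] {c : V → ZMod 2}
    (hc : IsDistinguishingVertexLabeling G c) (hG : G.Connected) (hcyc : ¬ G.IsAcyclic)
    (havoid : ∀ e : Sym2 V, ∃ (u : V) (w : G.Walk u u), w.IsCycle ∧ e ∉ w.edges) :
    ∃ ψ : Sym2 V → ZMod 2, IsDistinguishingEdgeLabeling G ψ :=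
  exists_isDistinguishingEdgeLabeling_of_forall_isInvariantPiece hc hG hcyc (by decide) havoid
    fun _ _ _ _ _ hσ₀ hσ hB => hB.exists_isDistinguishingEdgeLabeling_two hc hG hσ₀ hσ

theorem exists_isDistinguishingEdgeLabeling_zmod_three [Finite V] {c : V → ZMod 3}
    (hc : IsDistinguishingVertexLabeling G c) (hG : G.Connected) (hcyc : ¬ G.IsAcyclic)
    (havoid : ∀ e : Sym2 V, ∃ (u : V) (w : G.Walk u u), w.IsCycle ∧ e ∉ w.edges) :
    ∃ ψ : Sym2 V → ZMod 3, IsDistinguishingEdgeLabeling G ψ :=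
  exists_isDistinguishingEdgeLabeling_of_forall_isInvariantPiece hc hG hcyc (by decide) havoid
    fun _ _ _ _ _ hσ₀ hσ hB => hB.exists_isDistinguishingEdgeLabeling hc hG (by decide) hσ₀ hσ

end TwoAndThreeLabels

section DistToSet

variable {C : Set V} {v : V}

/-- The distance from `v` to the set `C`, with value `0` if `C` is empty. -/
noncomputable def distToSet (G : SimpleGraph V) (C : Set V) (v : V) : ℕ :=
  sInf (G.dist v '' C)

theorem exists_mem_dist_eq_distToSet (hC : C.Nonempty) (v : V) :
    ∃ z ∈ C, G.dist v z = distToSet G C v :=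
  Nat.sInf_mem (hC.image (G.dist v))

theorem distToSet_le_dist {z : V} (hz : z ∈ C) (v : V) : distToSet G C v ≤ G.dist v z :=
  Nat.sInf_le ⟨z, hz, rfl⟩

theorem distToSet_eq_zero_iff (hG : G.Connected) (hC : C.Nonempty) :
    distToSet G C v = 0 ↔ v ∈ C := by
  constructor
  · intro h
    obtain ⟨z, hz, hvz⟩ := exists_mem_dist_eq_distToSet (G := G) hC v
    rwa [hG.dist_eq_zero_iff.1 (hvz.trans h)]
  · intro hv
    exact Nat.le_zero.1 ((distToSet_le_dist hv v).trans_eq dist_self)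

theorem exists_adj_distToSet_add_one_eq (hG : G.Connected) (hC : C.Nonempty) (hv : v ∉ C) :
    ∃ u, G.Adj v u ∧ distToSet G C u + 1 = distToSet G C v := by
  obtain ⟨z, hz, hvz⟩ := exists_mem_dist_eq_distToSet (G := G) hC v
  obtain ⟨w, hw⟩ := hG.exists_walk_length_eq_dist v z
  cases w with
  | nil => exact absurd hz hv
  | @cons _ u _ hvu w =>
    refine ⟨u, hvu, le_antisymm ?_ ?_⟩
    · rw [← hvz, ← hw, Walk.length_cons]
      exact Nat.succ_le_succ ((distToSet_le_dist hz u).trans (dist_le w))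
    · obtain ⟨t, ht, hut⟩ := exists_mem_dist_eq_distToSet (G := G) hC u
      calc distToSet G C v ≤ G.dist v t := distToSet_le_dist ht v
        _ ≤ G.dist v u + G.dist u t := hG.dist_triangle
        _ = distToSet G C u + 1 := by rw [dist_eq_one_iff_adj.2 hvu, hut, add_comm]

theorem distToSet_apply_le (hG : G.Connected) (hC : C.Nonempty) {γ : G ≃g G}
    (hγ : ∀ v, γ v ∈ C ↔ v ∈ C) (v : V) : distToSet G C (γ v) ≤ distToSet G C v := by
  obtain ⟨z, hz, hvz⟩ := exists_mem_dist_eq_distToSet (G := G) hC v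
  obtain ⟨w, hw⟩ := hG.exists_walk_length_eq_dist v z
  calc distToSet G C (γ v) ≤ G.dist (γ v) (γ z) := distToSet_le_dist ((hγ z).2 hz) _
    _ ≤ (w.map γ.toHom).length := dist_le _
    _ = distToSet G C v := by rw [Walk.length_map, hw, hvz]

theorem distToSet_apply (hG : G.Connected) (hC : C.Nonempty) {γ : G ≃g G}
    (hγ : ∀ v, γ v ∈ C ↔ v ∈ C) (v : V) : distToSet G C (γ v) = distToSet G C v := by
  refine le_antisymm (distToSet_apply_le hG hC hγ v) ?_
  simpa using distToSet_apply_le hG hC (γ := γ.symm) (fun u => by rw [← hγ, γ.apply_symm_apply])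
    (γ v)

end DistToSet

section DihedralSymmetry

variable {g : ℕ}

theorem apply_eq_apply_zero_of_apply_add_one {α : Type*} {h : ZMod g → α}
    (hh : ∀ i, h (i + 1) = h i) (i : ZMod g) : h i = h 0 := by
  obtain ⟨n, rfl⟩ := ZMod.intCast_surjective i
  simpa using Function.Periodic.int_mul_eq hh n

theorem eq_add_or_eq_sub_of_injective (h₂ : (2 : ZMod g) ≠ 0) {π : ZMod g → ZMod g}
    (hinj : Function.Injective π) (hstep : ∀ i, π (i + 1) = π i + 1 ∨ π (i + 1) = π i - 1) :
    (∀ i, π i = π 0 + i) ∨ ∀ i, π i = π 0 - i := by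
  have hturn : ∀ i, π (i + 1 + 1) ≠ π i := fun i h =>
    h₂ (by linear_combination hinj h)
  have hδ : ∀ i, π (i + 1) - π i = π (0 + 1) - π 0 :=
    apply_eq_apply_zero_of_apply_add_one (h := fun i => π (i + 1) - π i) fun i => by
      rcases hstep i with h | h <;> rcases hstep (i + 1) with h' | h'
      · rw [h', h]; ring
      · exact absurd (by rw [h', h]; ring) (hturn i)
      · exact absurd (by rw [h', h]; ring) (hturn i)
      · rw [h', h]; ring
  have hlin : ∀ i, π i - (π (0 + 1) - π 0) * i = π 0 := fun i => by
    simpa using apply_eq_apply_zero_of_apply_add_one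
      (h := fun i => π i - (π (0 + 1) - π 0) * i) (fun i => by linear_combination hδ i) i
  refine (hstep 0).imp (fun h i => ?_) fun h i => ?_
  · linear_combination hlin i + i * h
  · linear_combination hlin i + i * h

/-- The labeling marks `k` and `r - 1 - k`, which are equal or consecutive when `r` is `2k + 1` or
`2k`. -/
theorem exists_labeling_forall_symm_eq_zero_or_eq {L : Type*} [Nontrivial L]
    (h₂ : (2 : ZMod g) ≠ 0) (r : ZMod g) :
    ∃ l : ZMod g → L, (∀ s, (∀ i, l (s + i) = l i) → s = 0) ∧
      ∀ s, (∀ i, l (s - 1 - i) = l i) → s = r := by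
  obtain ⟨o, o', hne⟩ := exists_pair_ne L
  obtain ⟨k, hk⟩ : ∃ k, r = 2 * k ∨ r = 2 * k + 1 := by
    obtain ⟨n, rfl⟩ := ZMod.intCast_surjective r
    obtain ⟨k, rfl | rfl⟩ := n.even_or_odd' <;> exact ⟨k, by push_cast; simp⟩
  classical
  set l : ZMod g → L := fun i => if i = k ∨ i = r - 1 - k then o' else o with hl
  have hlk : ∀ i, l i = o' ↔ i = k ∨ i = r - 1 - k := fun i => by
    simp only [hl, ite_eq_left_iff, hne, imp_false, not_not]
  refine ⟨l, fun s hs => ?_, fun s hs => ?_⟩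
  · have h := (hlk _).1 ((hs k).trans ((hlk k).2 (.inl rfl)))
    have h' := (hlk _).1 ((hs _).trans ((hlk (r - 1 - k)).2 (.inr rfl)))
    grind
  · have h := (hlk _).1 ((hs k).trans ((hlk k).2 (.inl rfl)))
    have h' := (hlk _).1 ((hs _).trans ((hlk (r - 1 - k)).2 (.inr rfl)))
    grind

end DihedralSymmetry

section CyclicVertices

variable {g : ℕ}

/-- The vertices `x i` form a cycle of length `g`, in cyclic order. -/
structure IsCyclicOrder (G : SimpleGraph V) (x : ZMod g → V) : Prop where
  three_le : 3 ≤ g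
  injective : Function.Injective x
  adj : ∀ i, G.Adj (x i) (x (i + 1))

/-- Each vertex off `C` is sent to a neighbour that is one step closer to `C`. -/
def IsParentMap (G : SimpleGraph V) (C : Set V) (p : V → V) : Prop :=
  ∀ v ∉ C, G.Adj v (p v) ∧ distToSet G C (p v) + 1 = distToSet G C v

theorem exists_isParentMap (hG : G.Connected) {C : Set V} (hC : C.Nonempty) :
    ∃ p, IsParentMap G C p := by
  have hstep : ∀ v, ∃ u, v ∉ C → G.Adj v u ∧ distToSet G C u + 1 = distToSet G C v := fun v => by
    by_cases hv : v ∈ C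
    · exact ⟨v, fun h => absurd hv h⟩
    · exact (exists_adj_distToSet_add_one_eq hG hC hv).imp fun u hu _ => hu
  choose p hp using hstep
  exact ⟨p, hp⟩

theorem IsParentMap.eq_and_eq_parent {C : Set V} {p : V → V} (hp : IsParentMap G C p)
    {u v t : V} (ht : t ∉ C) (h : s(v, u) = s(t, p t))
    (huv : distToSet G C u ≤ distToSet G C v) : v = t ∧ u = p t := by
  rcases Sym2.eq_iff.1 h with hvt | ⟨rfl, rfl⟩
  · exact hvt
  · exact absurd (hp u ht).2 (by lia)

theorem IsParentMap.injective {C : Set V} {p : V → V} (hp : IsParentMap G C p) :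
    Function.Injective fun v : ↥Cᶜ => s(v.1, p v.1) := fun v t h => by
  have hv := (hp v.1 v.2).2
  exact Subtype.ext (hp.eq_and_eq_parent t.2 h (by lia)).1

namespace IsCyclicOrder

variable {x : ZMod g → V}

theorem two_ne_zero (hx : IsCyclicOrder G x) : (2 : ZMod g) ≠ 0 := fun h => by
  have hdvd : g ∣ 2 := (ZMod.natCast_eq_zero_iff 2 g).1 (by exact_mod_cast h)
  exact absurd (Nat.le_of_dvd two_pos hdvd) (by have := hx.three_le; lia)

theorem edge_injective (hx : IsCyclicOrder G x) :
    Function.Injective fun i => s(x i, x (i + 1)) := fun i j h => by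
  rcases Sym2.eq_iff.1 h with ⟨h, -⟩ | ⟨h, h'⟩
  · exact hx.injective h
  · exact absurd (by linear_combination hx.injective h' - hx.injective h) hx.two_ne_zero

theorem exists_rotation_or_reflection (hx : IsCyclicOrder G x) {γ : G ≃g G}
    (hγ : ∀ i, ∃ j, s(γ (x i), γ (x (i + 1))) = s(x j, x (j + 1))) :
    ∃ r, (∀ i, γ (x i) = x (r + i)) ∨ ∀ i, γ (x i) = x (r - i) := by
  have hmap : ∀ i, ∃ j, γ (x i) = x j := fun i => by
    obtain ⟨j, hj⟩ := hγ i
    exact (Sym2.eq_iff.1 hj).elim (fun h => ⟨_, h.1⟩) fun h => ⟨_, h.1⟩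
  choose π hπ using hmap
  have hinj : Function.Injective π := fun i j h =>
    hx.injective (γ.injective (by rw [hπ, hπ, h]))
  have hstep : ∀ i, π (i + 1) = π i + 1 ∨ π (i + 1) = π i - 1 := fun i => by
    obtain ⟨j, hj⟩ := hγ i
    rw [hπ, hπ] at hj
    rcases Sym2.eq_iff.1 hj with ⟨h, h'⟩ | ⟨h, h'⟩
    · exact .inl (by rw [hx.injective h, hx.injective h'])
    · exact .inr (by rw [hx.injective h, hx.injective h', add_sub_cancel_right])
  refine ⟨π 0, (eq_add_or_eq_sub_of_injective hx.two_ne_zero hinj hstep).imp ?_ ?_⟩ <;>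
    exact fun h i => by rw [hπ, h]

theorem apply_mem_range_iff (hx : IsCyclicOrder G x) {γ : G ≃g G}
    (hγ : ∀ i, ∃ j, s(γ (x i), γ (x (i + 1))) = s(x j, x (j + 1))) (v : V) :
    γ v ∈ Set.range x ↔ v ∈ Set.range x := by
  obtain ⟨r, hr | hr⟩ := hx.exists_rotation_or_reflection hγ
  · exact ⟨fun ⟨j, hj⟩ => ⟨j - r, γ.injective (by rw [hr, ← hj, add_sub_cancel])⟩,
      fun ⟨i, hi⟩ => ⟨r + i, by rw [← hi, hr]⟩⟩
  · exact ⟨fun ⟨j, hj⟩ => ⟨r - j, γ.injective (by rw [hr, ← hj, sub_sub_cancel])⟩,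
      fun ⟨i, hi⟩ => ⟨r - i, by rw [← hi, hr]⟩⟩

end IsCyclicOrder

/-- The edges of the cycle `x` are labeled by `l`, the edge from a vertex `v` off the cycle to its
parent `p v` carries the vertex label `c v`, and all other edges have the label `o`. -/
noncomputable def cycleLabeling (x : ZMod g → V) (p : V → V) (c : V → L) (o : L) (l : ZMod g → L) :
    Sym2 V → L :=
  Function.extend (fun i => s(x i, x (i + 1))) l
    (Function.extend (fun v : ↥(Set.range x)ᶜ => s(v.1, p v.1)) (fun v => c v.1) fun _ => o)

section CycleLabeling

variable {x : ZMod g → V} {p : V → V} {c : V → L} {o : L} {l : ZMod g → L}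

theorem IsCyclicOrder.cycleLabeling_edge (hx : IsCyclicOrder G x) (i : ZMod g) :
    cycleLabeling x p c o l s(x i, x (i + 1)) = l i :=
  hx.edge_injective.extend_apply _ _ i

theorem ne_edge_of_notMem_range {u v : V} (hv : v ∉ Set.range x) (i : ZMod g) :
    s(v, u) ≠ s(x i, x (i + 1)) := fun h =>
  (Sym2.eq_iff.1 h).elim (fun h => hv ⟨_, h.1.symm⟩) fun h => hv ⟨_, h.1.symm⟩

theorem IsParentMap.cycleLabeling_parent (hp : IsParentMap G (Set.range x) p) {v : V}
    (hv : v ∉ Set.range x) : cycleLabeling x p c o l s(v, p v) = c v := by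
  rw [cycleLabeling, Function.extend_apply' _ _ _
    fun ⟨i, hi⟩ => ne_edge_of_notMem_range hv i hi.symm]
  exact hp.injective.extend_apply (fun v => c v.1) _ (⟨v, hv⟩ : ↥(Set.range x)ᶜ)

theorem exists_eq_of_cycleLabeling_ne {e : Sym2 V} (he : cycleLabeling x p c o l e ≠ o) :
    (∃ i, e = s(x i, x (i + 1))) ∨ ∃ v ∉ Set.range x, e = s(v, p v) := by
  contrapose! he
  rw [cycleLabeling, Function.extend_apply' _ _ _ fun ⟨i, hi⟩ => he.1 i hi.symm,
    Function.extend_apply' _ _ _ fun ⟨v, hv⟩ => he.2 v.1 v.2 hv.symm]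

theorem IsParentMap.apply_eq_of_ne (hp : IsParentMap G (Set.range x) p) (hG : G.Connected)
    {γ : G ≃g G} (hγ : PreservesEdgeLabeling G (cycleLabeling x p c o l) γ)
    (hx : ∀ v, γ v ∈ Set.range x ↔ v ∈ Set.range x) {v : V} (hv : v ∉ Set.range x)
    (hvo : c v ≠ o) : c (γ v) = c v := by
  have hγv : γ v ∉ Set.range x := (hx v).not.2 hv
  have hlabel := (hγ v (p v) (hp v hv).1).trans (hp.cycleLabeling_parent hv)
  rcases exists_eq_of_cycleLabeling_ne (hlabel ▸ hvo) with ⟨i, hi⟩ | ⟨t, ht, h⟩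
  · exact absurd hi (ne_edge_of_notMem_range hγv i)
  · have hdist : distToSet G (Set.range x) (γ (p v)) ≤ distToSet G (Set.range x) (γ v) := by
      have hC : (Set.range x).Nonempty := ⟨x 0, 0, rfl⟩
      rw [distToSet_apply hG hC hx, distToSet_apply hG hC hx, ← (hp v hv).2]
      exact Nat.le_succ _
    obtain ⟨hγt, hpt⟩ := hp.eq_and_eq_parent ht h hdist
    rw [hγt, hpt, hp.cycleLabeling_parent ht] at hlabel
    rw [hγt, hlabel]

theorem IsParentMap.apply_eq (hp : IsParentMap G (Set.range x) p) (hG : G.Connected)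
    {γ : G ≃g G} (hγ : PreservesEdgeLabeling G (cycleLabeling x p c o l) γ)
    (hx : ∀ v, γ v ∈ Set.range x ↔ v ∈ Set.range x) {v : V} (hv : v ∉ Set.range x) :
    c (γ v) = c v := by
  by_cases hvo : c v = o
  · by_contra hne
    have h := hp.apply_eq_of_ne hG hγ.symm (fun u => by rw [← hx, γ.apply_symm_apply])
      ((hx v).not.2 hv) fun h => hne (h.trans hvo.symm)
    exact hne (by rw [← h, γ.symm_apply_apply])
  · exact hp.apply_eq_of_ne hG hγ hx hv hvo

theorem IsCyclicOrder.apply_eq_and_exists_symm (hx : IsCyclicOrder G x)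
    (hp : IsParentMap G (Set.range x) p) (hG : G.Connected) {γ : G ≃g G}
    (hγ : PreservesEdgeLabeling G (cycleLabeling x p c o l) γ)
    (hmap : ∀ i, ∃ j, s(γ (x i), γ (x (i + 1))) = s(x j, x (j + 1))) :
    (∀ v ∉ Set.range x, c (γ v) = c v) ∧
      ∃ r, ((∀ i, γ (x i) = x (r + i)) ∧ ∀ i, l (r + i) = l i) ∨
        ((∀ i, γ (x i) = x (r - i)) ∧ ∀ i, l (r - 1 - i) = l i) := by
  refine ⟨fun v hv => hp.apply_eq hG hγ (hx.apply_mem_range_iff hmap) hv, ?_⟩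
  have hlabel : ∀ i, cycleLabeling x p c o l s(γ (x i), γ (x (i + 1))) = l i := fun i =>
    (hγ _ _ (hx.adj i)).trans (hx.cycleLabeling_edge i)
  obtain ⟨r, hr | hr⟩ := hx.exists_rotation_or_reflection hmap
  · refine ⟨r, .inl ⟨hr, fun i => ?_⟩⟩
    rw [← hlabel i, hr, hr, ← add_assoc, hx.cycleLabeling_edge]
  · refine ⟨r, .inr ⟨hr, fun i => ?_⟩⟩
    rw [← hlabel i, hr, hr, Sym2.eq_swap, show r - i = r - 1 - i + 1 by ring,
      show r - (i + 1) = r - 1 - i by ring, hx.cycleLabeling_edge]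

theorem IsCyclicOrder.map_edge_eq_edge_or_parent (hx : IsCyclicOrder G x) (hl : ∀ i, l i ≠ o)
    {γ : G ≃g G} (hγ : PreservesEdgeLabeling G (cycleLabeling x p c o l) γ) (i : ZMod g) :
    (∃ j, s(γ (x i), γ (x (i + 1))) = s(x j, x (j + 1))) ∨
      ∃ v ∉ Set.range x, s(γ (x i), γ (x (i + 1))) = s(v, p v) :=
  exists_eq_of_cycleLabeling_ne (by rw [hγ _ _ (hx.adj i), hx.cycleLabeling_edge]; exact hl i)

/-- If the cycle leaves itself under `γ`, the two neighbours of a furthest vertex of its image are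
both the parent of that vertex. -/
theorem IsCyclicOrder.apply_mem_range (hx : IsCyclicOrder G x)
    (hp : IsParentMap G (Set.range x) p) (hG : G.Connected) (hl : ∀ i, l i ≠ o) {γ : G ≃g G}
    (hγ : PreservesEdgeLabeling G (cycleLabeling x p c o l) γ) (i : ZMod g) :
    γ (x i) ∈ Set.range x := by
  have hC : (Set.range x).Nonempty := ⟨x 0, 0, rfl⟩
  have : NeZero g := ⟨by have := hx.three_le; lia⟩
  obtain ⟨k, hk⟩ := Finite.exists_max fun i => distToSet G (Set.range x) (γ (x i))
  suffices hk₀ : γ (x k) ∈ Set.range x by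
    rw [← distToSet_eq_zero_iff hG hC, ← Nat.le_zero]
    exact (hk i).trans_eq ((distToSet_eq_zero_iff hG hC).2 hk₀)
  by_contra hkx
  have hparent : ∀ j, j + 1 = k ∨ k + 1 = j → γ (x j) = p (γ (x k)) := by
    intro j hjk
    have hkj : (∃ i, s(γ (x k), γ (x j)) = s(x i, x (i + 1))) ∨
        ∃ v ∉ Set.range x, s(γ (x k), γ (x j)) = s(v, p v) := by
      rcases hjk with rfl | rfl
      · exact Sym2.eq_swap ▸ hx.map_edge_eq_edge_or_parent hl hγ j
      · exact hx.map_edge_eq_edge_or_parent hl hγ k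
    rcases hkj with ⟨i, hi⟩ | ⟨v, hv, h⟩
    · exact absurd hi (ne_edge_of_notMem_range hkx i)
    · obtain ⟨hkv, hjv⟩ := hp.eq_and_eq_parent hv h (hk j)
      rw [hkv, hjv]
  have hnbr := (hparent (k + 1) (.inr rfl)).trans
    (hparent (k - 1) (.inl (sub_add_cancel k 1))).symm
  exact hx.two_ne_zero (by linear_combination hx.injective (γ.injective hnbr))

theorem IsCyclicOrder.exists_map_edge_eq (hx : IsCyclicOrder G x)
    (hp : IsParentMap G (Set.range x) p) (hG : G.Connected) (hl : ∀ i, l i ≠ o) {γ : G ≃g G}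
    (hγ : PreservesEdgeLabeling G (cycleLabeling x p c o l) γ) (i : ZMod g) :
    ∃ j, s(γ (x i), γ (x (i + 1))) = s(x j, x (j + 1)) := by
  have hmem := hx.apply_mem_range hp hG hl hγ
  refine (hx.map_edge_eq_edge_or_parent hl hγ i).resolve_right fun ⟨v, hv, h⟩ => ?_
  exact (Sym2.eq_iff.1 h).elim (fun h => hv (h.1 ▸ hmem i)) fun h => hv (h.2 ▸ hmem (i + 1))

/-- With four labels, one is reserved for the edges off the tree and the cycle, and the other three
break the dihedral symmetry of the cycle. -/
theorem IsCyclicOrder.exists_isDistinguishingEdgeLabeling_of_four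
    (hx : IsCyclicOrder G x) (hc : IsDistinguishingVertexLabeling G c) (hG : G.Connected)
    (a : Fin 4 ↪ L) : ∃ ψ : Sym2 V → L, IsDistinguishingEdgeLabeling G ψ := by
  obtain ⟨p, hp⟩ := exists_isParentMap hG (C := Set.range x) ⟨x 0, 0, rfl⟩
  have h₁ : (1 : ZMod g) ≠ 0 := fun h => hx.two_ne_zero (by linear_combination 2 * h)
  set l : ZMod g → L := fun i => if i = 0 then a 1 else if i = 1 then a 2 else a 3 with hl
  have hlo : ∀ i, l i ≠ a 0 := fun i => by
    simp only [hl]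
    split_ifs <;> exact a.injective.ne (by decide)
  have hl₀ : ∀ i, l i = l 0 → i = 0 := fun i h => by
    by_contra hi
    simp only [hl, hi, if_true, if_false] at h
    split_ifs at h <;> exact absurd (a.injective h) (by decide)
  have hl₁ : ∀ i, l i = l 1 → i = 1 := fun i h => by
    by_contra hi
    simp only [hl, hi, h₁, if_true, if_false] at h
    split_ifs at h <;> exact absurd (a.injective h) (by decide)
  refine ⟨cycleLabeling x p c (a 0) l, fun γ hγ => hc γ fun v => ?_⟩
  obtain ⟨hoff, r, ⟨hr, hlr⟩ | ⟨-, hlr⟩⟩ :=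
    hx.apply_eq_and_exists_symm hp hG hγ (hx.exists_map_edge_eq hp hG hlo hγ)
  · have hr₀ : r = 0 := by simpa using hl₀ _ (hlr 0)
    by_cases hv : v ∈ Set.range x
    · obtain ⟨i, rfl⟩ := hv
      rw [hr, hr₀, zero_add]
    · exact hoff v hv
  · exact absurd (by linear_combination hl₀ _ (hlr 0) - hl₁ _ (hlr 1)) hx.two_ne_zero

/-- If every reflection of the cycle extends to an automorphism preserving `c` off the cycle, `c`
itself labels the edges of the cycle; otherwise they are labeled so that a missing reflection is
their only symmetry. -/
theorem IsCyclicOrder.exists_isDistinguishingEdgeLabeling_of_forall_map [Nontrivial L]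
    (hx : IsCyclicOrder G x) (hc : IsDistinguishingVertexLabeling G c) (hG : G.Connected)
    (hmap : ∀ (γ : G ≃g G) (i : ZMod g), ∃ j, s(γ (x i), γ (x (i + 1))) = s(x j, x (j + 1))) :
    ∃ ψ : Sym2 V → L, IsDistinguishingEdgeLabeling G ψ := by
  obtain ⟨p, hp⟩ := exists_isParentMap hG (C := Set.range x) ⟨x 0, 0, rfl⟩
  obtain ⟨o, -⟩ := exists_pair_ne L
  have hfix : ∀ γ : G ≃g G, (∀ v ∉ Set.range x, c (γ v) = c v) →
      (∀ i, c (γ (x i)) = c (x i)) → ∀ v, γ v = v := fun γ hoff hon =>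
    hc γ fun v => by
      by_cases hv : v ∈ Set.range x
      · obtain ⟨i, rfl⟩ := hv
        exact hon i
      · exact hoff v hv
  by_cases hrefl : ∀ r, ∃ γ : G ≃g G, (∀ v ∉ Set.range x, c (γ v) = c v) ∧
      ∀ i, γ (x i) = x (r - i)
  · refine ⟨cycleLabeling x p c o (c ∘ x), fun γ hγ => ?_⟩
    obtain ⟨hoff, r, ⟨hr, hl⟩ | ⟨-, hl⟩⟩ := hx.apply_eq_and_exists_symm hp hG hγ (hmap γ)
    · exact hfix γ hoff fun i => by rw [hr]; exact hl i
    · obtain ⟨θ, hθoff, hθ⟩ := hrefl (r - 1)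
      have hθfix : ∀ i, r - 1 - i = i := fun i => hx.injective <| by
        rw [← hθ, hfix θ hθoff fun i => by rw [hθ]; exact hl i]
      exact absurd (by linear_combination hθfix 0 - hθfix 1) hx.two_ne_zero
  · push Not at hrefl
    obtain ⟨r, hr⟩ := hrefl
    obtain ⟨l, hrot, hunique⟩ := exists_labeling_forall_symm_eq_zero_or_eq (L := L) hx.two_ne_zero r
    refine ⟨cycleLabeling x p c o l, fun γ hγ => ?_⟩
    obtain ⟨hoff, s, ⟨hs, hl⟩ | ⟨hs, hl⟩⟩ := hx.apply_eq_and_exists_symm hp hG hγ (hmap γ)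
    · exact hfix γ hoff fun i => by rw [hs, hrot s hl, zero_add]
    · obtain ⟨i, hi⟩ := hr γ hoff
      exact absurd (hunique s hl ▸ hs i) hi

end CycleLabeling

end CyclicVertices

theorem getVert_val_add_one {u : V} {w : G.Walk u u} [NeZero w.length] (i : ZMod w.length) :
    w.getVert (i + 1).val = w.getVert (i.val + 1) := by
  rcases (Nat.succ_le_of_lt i.val_lt).lt_or_eq with h | h
  · have : Fact (1 < w.length) := ⟨by lia⟩
    have hval : i.val + (1 : ZMod w.length).val < w.length := by rwa [ZMod.val_one]
    rw [ZMod.val_add_of_lt hval, ZMod.val_one]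
  · have hi : i + 1 = 0 := by
      simpa using congrArg (Nat.cast : ℕ → ZMod w.length) h
    rw [hi, ZMod.val_zero, show i.val + 1 = w.length from h, w.getVert_length, w.getVert_zero]

theorem exists_isCyclicOrder_of_isCycle {u : V} {w : G.Walk u u} (hw : w.IsCycle) :
    ∃ x : ZMod w.length → V, IsCyclicOrder G x ∧
      ∀ e, e ∈ w.edges ↔ ∃ i, e = s(x i, x (i + 1)) := by
  have hlen := hw.three_le_length
  have : NeZero w.length := ⟨by lia⟩
  refine ⟨fun i => w.getVert i.val, ⟨hlen, fun i j hij => ?_, fun i => ?_⟩, fun e => ⟨?_, ?_⟩⟩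
  · have hval : ∀ i : ZMod w.length, i.val ≤ w.length - 1 := fun i => Nat.le_pred_of_lt i.val_lt
    exact ZMod.val_injective _ (hw.getVert_injOn' (hval i) (hval j) hij)
  · rw [getVert_val_add_one]
    exact w.adj_getVert_succ i.val_lt
  · intro he
    obtain ⟨n, hn, rfl⟩ := List.mem_iff_getElem.1 he
    rw [Walk.length_edges] at hn
    refine ⟨n, ?_⟩
    simp only [getVert_val_add_one, ZMod.val_natCast_of_lt hn, Walk.getElem_edges]
  · rintro ⟨i, rfl⟩
    simp only [getVert_val_add_one]
    exact List.mem_iff_getElem.2 ⟨i.val, by rw [Walk.length_edges]; exact i.val_lt,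
      by rw [Walk.getElem_edges]⟩

theorem exists_isDistinguishingEdgeLabeling_of_forall_mem_edges [Nontrivial L] {c : V → L}
    (hc : IsDistinguishingVertexLabeling G c) (hG : G.Connected) {u : V} {w : G.Walk u u}
    (hw : w.IsCycle) {e : Sym2 V}
    (he : ∀ (u : V) (w : G.Walk u u), w.IsCycle → e ∈ w.edges) :
    ∃ ψ : Sym2 V → L, IsDistinguishingEdgeLabeling G ψ := by
  obtain ⟨x, hx, hedges⟩ := exists_isCyclicOrder_of_isCycle hw
  refine hx.exists_isDistinguishingEdgeLabeling_of_forall_map hc hG fun γ i => ?_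
  have hmem : s(x i, x (i + 1)).map γ ∈ (w.map γ.toHom).edges :=
    (map_mem_edges_map γ w).2 ((hedges _).2 ⟨i, rfl⟩)
  exact (hedges _).1 (edges_subset_of_forall_mem_edges he (hw.map γ.injective) hw hmem)

theorem exists_isDistinguishingEdgeLabeling_fin [Finite V] (hG : G.Connected)
    (hcyc : ¬ G.IsAcyclic) {d : ℕ} {c : V → Fin d} (hc : IsDistinguishingVertexLabeling G c) :
    ∃ ψ : Sym2 V → Fin d, IsDistinguishingEdgeLabeling G ψ := by
  obtain ⟨v⟩ := hG.nonempty
  obtain ⟨u, w, hw⟩ : ∃ (u : V) (w : G.Walk u u), w.IsCycle := by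
    simpa [IsAcyclic] using hcyc
  obtain ⟨x, hx, -⟩ := exists_isCyclicOrder_of_isCycle hw
  rcases le_or_gt d 1 with hd | hd
  · have := Fin.subsingleton_iff_le_one.2 hd
    exact ⟨fun _ => c v, fun γ _ => hc γ fun _ => Subsingleton.elim _ _⟩
  rcases le_or_gt 4 d with hd' | hd'
  · exact hx.exists_isDistinguishingEdgeLabeling_of_four hc hG (Fin.castLEEmb hd')
  have : Nontrivial (Fin d) := Fin.nontrivial_iff_two_le.2 hd
  by_cases hshared : ∃ e : Sym2 V, ∀ (u : V) (w : G.Walk u u), w.IsCycle → e ∈ w.edges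
  · obtain ⟨e, he⟩ := hshared
    exact exists_isDistinguishingEdgeLabeling_of_forall_mem_edges hc hG hw he
  push Not at hshared
  obtain rfl | rfl : d = 2 ∨ d = 3 := by lia
  exacts [exists_isDistinguishingEdgeLabeling_zmod_two hc hG hcyc hshared,
    exists_isDistinguishingEdgeLabeling_zmod_three hc hG hcyc hshared]

end DistinguishingLabelings

/-- If `G` is a finite connected simple graph containing at least one cycle,
then `D'(G) ≤ D(G)`. -/
theorem distinguishingIndex_le_distinguishingNumber_of_not_isAcyclic
    {V : Type*} [Fintype V] (G : SimpleGraph V)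
    (hconn : G.Connected) (hcyc : ¬ G.IsAcyclic) :
    distinguishingIndex G ≤ distinguishingNumber G := by
  have hne : {d : ℕ | ∃ φ : V → Fin d,
      ∀ f : G ≃g G, (∀ x : V, φ (f x) = φ x) → ∀ x : V, f x = x}.Nonempty :=
    ⟨Fintype.card V, Fintype.equivFin V, fun f h x => (Fintype.equivFin V).injective (h x)⟩
  obtain ⟨c, hc⟩ := Nat.sInf_mem hne
  obtain ⟨ψ, hψ⟩ := exists_isDistinguishingEdgeLabeling_fin hconn hcyc hc
  exact Nat.sInf_le ⟨fun e => ψ e.1, fun f hf => hψ f fun x y hxy => hf ⟨s(x, y), hxy⟩⟩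
end

section
/- Let G be a finite connected simple graph on at least 3 vertices. Then the distinguishing index of G is at most the distinguishing number of G plus one, i.e., D'(G) ≤ D(G) + 1. -/
open SimpleGraph

/-!
Let `T` be a subgraph of `G` whose component at a root `r` is a tree, and colour each edge of `T`
by the label of its endpoint farther from `r`, and all other edges of `G` by one new colour. An
automorphism of `G` that preserves this colouring preserves `T`; if moreover it fixes `r`, it
preserves the label of every vertex of the tree, so it is trivial once the vertex labels are
distinguishing and `T` misses at most one vertex.

It remains to find a tree with a vertex `r` fixed by all its automorphisms. On a tree of odd order
the sum of distances to all vertices takes different values at adjacent vertices, and it is convex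
along paths, so its minimum is attained only once, at a vertex that every automorphism must fix.
A connected graph on evenly many vertices has a vertex whose removal leaves it connected, and this
is the vertex that `T` misses.
-/

section

variable {V W α : Type*} {G T : SimpleGraph V}

/-- A vertex labeling is distinguishing if only the trivial automorphism preserves it. The labels
form an arbitrary type; `distinguishingNumber` is the case `Fin d`. -/
def IsVertexDistinguishing (G : SimpleGraph V) (φ : V → α) : Prop :=
  ∀ f : G ≃g G, (∀ x, φ (f x) = φ x) → ∀ x, f x = x

/-- An edge labeling is distinguishing if only the trivial automorphism preserves it, where trivial
means that it fixes every vertex (not just every edge). -/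
def IsEdgeDistinguishing (G : SimpleGraph V) (ψ : G.edgeSet → α) : Prop :=
  ∀ f : G ≃g G, (∀ e, ψ (f.mapEdgeSet e) = ψ e) → ∀ x, f x = x

theorem exists_isVertexDistinguishing_fin_distinguishingNumber [Finite V] (G : SimpleGraph V) :
    ∃ φ : V → Fin (distinguishingNumber G), IsVertexDistinguishing G φ :=
  Nat.sInf_mem (s := {d | ∃ φ : V → Fin d, IsVertexDistinguishing G φ})
    ⟨Nat.card V, Finite.equivFin V, fun _ hf x => (Finite.equivFin V).injective (hf x)⟩

theorem IsEdgeDistinguishing.distinguishingIndex_le_card [Fintype α] {ψ : G.edgeSet → α}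
    (hψ : IsEdgeDistinguishing G ψ) : distinguishingIndex G ≤ Fintype.card α :=
  Nat.sInf_le ⟨Fintype.equivFin α ∘ ψ, fun f hf =>
    hψ f fun e => (Fintype.equivFin α).injective (hf e)⟩

theorem dist_iso_apply {H : SimpleGraph W} (f : G ≃g H) (u v : V) :
    H.dist (f u) (f v) = G.dist u v := by
  rw [dist_eq_sInf, dist_eq_sInf]
  congr 1
  ext n
  constructor
  · rintro ⟨p, rfl⟩
    exact ⟨(p.map f.symm.toHom).copy (f.symm_apply_apply u) (f.symm_apply_apply v), by simp⟩
  · rintro ⟨p, rfl⟩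
    exact ⟨p.map f.toHom, p.length_map f.toHom⟩

/-- `IsParent G r p v` says that `p` is a parent of `v` when the graph `G` is rooted at `r`: a
neighbor of `v` that is one step closer to `r`. -/
def IsParent (G : SimpleGraph V) (r p v : V) : Prop :=
  G.Adj p v ∧ G.dist r v = G.dist r p + 1

theorem exists_isParent {r v : V} (h : G.Reachable r v) (hne : v ≠ r) : ∃ p, IsParent G r p v := by
  obtain ⟨p, hp⟩ := h.symm.exists_walk_length_eq_dist
  cases p with
  | nil => exact absurd rfl hne
  | @cons _ w _ hvw q =>
    refine ⟨w, hvw.symm, ?_⟩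
    have hw : G.dist r w < G.dist r v := by
      rw [dist_comm, dist_comm (u := r), ← hp, Walk.length_cons]
      exact Nat.lt_succ_of_le (dist_le q)
    have := hvw.diff_dist_adj (u := r)
    lia

theorem IsParent.reachable {r p v : V} (h : IsParent G r p v) : G.Reachable r v :=
  .of_dist_ne_zero (by rw [h.2]; exact Nat.succ_ne_zero _)

theorem IsParent.map {H : SimpleGraph W} {r p v : V} (h : IsParent G r p v) (f : G ≃g H) :
    IsParent H (f r) (f p) (f v) :=
  ⟨f.map_adj_iff.2 h.1, by rw [dist_iso_apply, dist_iso_apply, h.2]⟩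

theorem IsParent.eq_of_isAcyclic {r p q v : V} (hG : G.IsAcyclic) (hp : IsParent G r p v)
    (hq : IsParent G r q v) : p = q := by
  have exists_path {x : V} (hx : IsParent G r x v) :
      ∃ P : G.Path r v, P.1.penultimate = x := by
    obtain ⟨P, hP⟩ := (hx.reachable.trans hx.1.symm.reachable).exists_walk_length_eq_dist
    have hlength : (P.concat hx.1).length = G.dist r v := by rw [Walk.length_concat, hP, hx.2]
    exact ⟨⟨_, Walk.isPath_of_length_eq_dist _ hlength⟩, Walk.penultimate_concat P hx.1⟩
  obtain ⟨P, rfl⟩ := exists_path hp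
  obtain ⟨Q, rfl⟩ := exists_path hq
  rw [(hG.subsingleton_path r v).elim P Q]

/-- The sum of the distances from `v` to all vertices (the status or transmission of `v`), whose
minimizers are the medians of `G`. Vertices outside the component of `v` contribute `0`, so in a
disconnected graph this is the distance sum within that component. -/
noncomputable def distSum [Fintype V] (G : SimpleGraph V) (v : V) : ℕ :=
  ∑ w, G.dist w v

theorem distSum_iso_apply [Fintype V] [Fintype W] {H : SimpleGraph W} (f : G ≃g H) (v : V) :
    distSum H (f v) = distSum G v :=
  (Fintype.sum_equiv f.toEquiv _ _ fun w => (dist_iso_apply f w v).symm).symm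

theorem odd_dist_add_dist_iff_reachable (hG : G.IsAcyclic) {u v : V} (huv : G.Adj u v) (w : V) :
    Odd (G.dist w u + G.dist w v) ↔ G.Reachable u w := by
  by_cases hw : G.Reachable w u
  · simp only [hw.symm, iff_true]
    rcases hG.dist_eq_dist_add_one_of_adj_of_reachable w huv hw with h | h <;> rw [h] <;> grind
  · have hwv : ¬ G.Reachable w v := fun h => hw (h.trans huv.symm.reachable)
    simp [dist_eq_zero_of_not_reachable, hw, hwv, reachable_comm (u := u)]

theorem odd_distSum_add_distSum_iff [Fintype V] (hG : G.IsAcyclic) {u v : V} (huv : G.Adj u v) :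
    Odd (distSum G u + distSum G v) ↔ Odd {w | G.Reachable u w}.ncard := by
  classical
  simp only [distSum, ← Finset.sum_add_distrib, Finset.odd_sum_iff_odd_card_odd,
    odd_dist_add_dist_iff_reachable hG huv]
  rw [← Set.ncard_coe_finset, Finset.coe_filter_univ]

theorem two_mul_dist_le_dist_add_dist (hG : G.IsAcyclic) {a b c : V} (hab : G.Adj a b)
    (hbc : G.Adj b c) (hac : a ≠ c) (w : V) :
    2 * G.dist w b ≤ G.dist w a + G.dist w c := by
  by_cases hb : G.Reachable w b
  · have ha := hG.dist_eq_dist_add_one_of_adj_of_reachable w hab.symm hb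
    have hc := hG.dist_eq_dist_add_one_of_adj_of_reachable w hbc hb
    have hnot : ¬ (G.dist w b = G.dist w a + 1 ∧ G.dist w b = G.dist w c + 1) := fun ⟨h, h'⟩ =>
      hac (IsParent.eq_of_isAcyclic hG ⟨hab, h⟩ ⟨hbc.symm, h'⟩)
    lia
  · simp [dist_eq_zero_of_not_reachable hb]

theorem two_mul_distSum_le_distSum_add_distSum [Fintype V] (hG : G.IsAcyclic) {a b c : V}
    (hab : G.Adj a b) (hbc : G.Adj b c) (hac : a ≠ c) :
    2 * distSum G b ≤ distSum G a + distSum G c := by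
  simp only [distSum, Finset.mul_sum, ← Finset.sum_add_distrib]
  exact Finset.sum_le_sum fun w _ => two_mul_dist_le_dist_add_dist hG hab hbc hac w

theorem lt_of_isPath_cons [Preorder α] {g : V → α}
    (hg : ∀ ⦃a b c⦄, G.Adj a b → G.Adj b c → a ≠ c → g a < g b → g b < g c) {a b c : V}
    (hab : G.Adj a b) (p : G.Walk b c) (hp : (p.cons hab).IsPath) (hlt : g a < g b) :
    g a < g c := by
  induction p generalizing a with
  | nil => exact hlt
  | @cons b d _ hbd q ih =>
    obtain ⟨hq, ha⟩ := (Walk.cons_isPath_iff _ _).1 hp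
    have had : a ≠ d := by
      rintro rfl
      simp at ha
    exact hlt.trans (ih hbd hq (hg hab hbd had hlt))

theorem distSum_lt_of_forall_adj_le [Fintype V] (hG : G.IsAcyclic) {r v : V}
    (hodd : Odd {w | G.Reachable r w}.ncard) (hmin : ∀ w, G.Adj r w → distSum G r ≤ distSum G w)
    (hv : G.Reachable r v) (hne : r ≠ v) : distSum G r < distSum G v := by
  obtain ⟨p, hp⟩ := hv.exists_isPath
  cases p with
  | nil => exact absurd rfl hne
  | cons hrw q =>
    refine lt_of_isPath_cons (fun a b c hab hbc hac hlt => ?_) hrw q hp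
      ((hmin _ hrw).lt_of_ne fun heq => ?_)
    · have := two_mul_distSum_le_distSum_add_distSum hG hab hbc hac
      lia
    · rw [← odd_distSum_add_distSum_iff hG hrw, ← heq] at hodd
      exact Nat.not_odd_iff_even.2 (Even.add_self _) hodd

theorem exists_reachable_forall_iso_apply_eq [Finite V] (hG : G.IsAcyclic) {v : V}
    (hodd : Odd {w | G.Reachable v w}.ncard) :
    ∃ r, G.Reachable v r ∧ ∀ f : G ≃g G, G.Reachable v (f r) → f r = r := by
  have := Fintype.ofFinite V
  obtain ⟨r, hr : G.Reachable v r, hmin⟩ :=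
    Set.exists_min_image {w | G.Reachable v w} (distSum G) (Set.toFinite _) ⟨v, .rfl⟩
  have hcomp : {w | G.Reachable v w} = {w | G.Reachable r w} :=
    Set.ext fun w => ⟨hr.symm.trans, hr.trans⟩
  refine ⟨r, hr, fun f hf => ?_⟩
  by_contra hne
  refine (distSum_lt_of_forall_adj_le hG (hcomp ▸ hodd) (fun w hw => ?_)
    (hr.symm.trans hf) (Ne.symm hne)).ne (distSum_iso_apply f r).symm
  exact hmin w (hr.trans hw.reachable)

theorem exists_le_odd_ncard_reachable [Finite V] (hG : G.Connected) (hcard : 3 ≤ Nat.card V) :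
    ∃ H ≤ G, ∃ v, Odd {u | H.Reachable v u}.ncard ∧ 1 < {u | H.Reachable v u}.ncard ∧
      {u | ¬ H.Reachable v u}.Subsingleton := by
  have : Nontrivial V := Finite.one_lt_card_iff_nontrivial.1 (by lia)
  rcases Nat.even_or_odd (Nat.card V) with heven | hodd
  · obtain ⟨w, hw⟩ := hG.exists_connected_induce_compl_singleton_of_finite_nontrivial
    obtain ⟨v, hv⟩ := hw.nonempty
    have hcomp : {u | (G.deleteIncidenceSet w).Reachable v u} = {w}ᶜ := by
      ext u
      constructor
      · rintro h rfl
        obtain ⟨p, hp⟩ := exists_isParent h (Ne.symm hv)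
        exact (deleteIncidenceSet_adj.1 hp.1).2.2 rfl
      · intro hu
        rw [← G.induce_deleteIncidenceSet_of_notMem (x := w) (by simp)] at hw
        exact (hw ⟨v, hv⟩ ⟨u, hu⟩).map (Embedding.induce _).toHom
    have hncard : ({w}ᶜ : Set V).ncard = Nat.card V - 1 := by
      rw [Set.ncard_compl, Set.ncard_singleton]
    refine ⟨G.deleteIncidenceSet w, G.deleteIncidenceSet_le w, v, ?_, ?_, ?_⟩
    · rw [hcomp, hncard]
      exact Nat.Even.sub_odd (by lia) heven odd_one
    · rw [hcomp, hncard]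
      lia
    · rw [← Set.compl_ofPred, hcomp, compl_compl]
      exact Set.subsingleton_singleton
  · obtain ⟨v⟩ := hG.nonempty
    have hcomp : {u | G.Reachable v u} = Set.univ := Set.eq_univ_of_forall (hG v)
    refine ⟨G, le_rfl, v, ?_, ?_, ?_⟩
    · rwa [hcomp, Set.ncard_univ]
    · rw [hcomp, Set.ncard_univ]
      lia
    · simp [hG.preconnected v]

theorem dist_ne_dist_of_subsingleton (hT : T.IsAcyclic) {r x y : V}
    (hr : {u | ¬ T.Reachable r u}.Subsingleton) (hxy : T.Adj x y) :
    T.dist r x ≠ T.dist r y := by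
  refine hT.dist_ne_of_adj hxy (by_contra fun hx => hxy.ne (hr hx fun hy => hx ?_))
  exact hy.trans hxy.symm.reachable

theorem exists_isAcyclic_le_forall_iso_apply_eq [Finite V] (hG : G.Connected)
    (hcard : 3 ≤ Nat.card V) :
    ∃ T ≤ G, ∃ r, T.IsAcyclic ∧ {u | ¬ T.Reachable r u}.Subsingleton ∧
      ∀ f : T ≃g T, f r = r := by
  obtain ⟨H, hHG, v, hodd, hlt, hsub⟩ := exists_le_odd_ncard_reachable hG hcard
  obtain ⟨T, hTH, hT, hreach⟩ := H.exists_isAcyclic_reachable_eq_le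
  rw [← hreach] at hodd hlt hsub
  obtain ⟨r, hr, hfix⟩ := exists_reachable_forall_iso_apply_eq hT hodd
  have hsub_r : {u | ¬ T.Reachable r u}.Subsingleton :=
    hsub.anti fun u hu h => hu (hr.symm.trans h)
  refine ⟨T, hTH.trans hHG, r, hT, hsub_r, fun f => hfix f (by_contra fun hfr => ?_)⟩
  obtain ⟨s, hs, hsr⟩ := Set.exists_ne_of_one_lt_ncard hlt r
  have hfs : ¬ T.Reachable v (f s) := fun h =>
    hfr (h.trans (Iso.reachable_iff.2 (hs.symm.trans hr)))
  exact hsr (f.injective (hsub hfs hfr))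

/-- The labeling of the edges of a graph `T` rooted at `r` that gives the edge joining a parent to
its child the label `some (φ child)`. It is defined on all unordered pairs, with `none` as the label
of those not of this form. -/
noncomputable def childLabeling (T : SimpleGraph V) (r : V) (φ : V → α) : Sym2 V → Option α :=
  Function.extend (fun q : {q : V × V // IsParent T r q.1 q.2} => s(q.1.1, q.1.2))
    (fun q => some (φ q.1.2)) fun _ => none

theorem childLabeling_mk_of_isParent {r p v : V} (h : IsParent T r p v) (φ : V → α) :
    childLabeling T r φ s(p, v) = some (φ v) := by
  refine Function.FactorsThrough.extend_apply ?_ _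
    (⟨(p, v), h⟩ : {q : V × V // IsParent T r q.1 q.2})
  rintro ⟨⟨p, v⟩, hpv⟩ ⟨⟨p', v'⟩, hpv'⟩ heq
  obtain ⟨-, rfl⟩ | ⟨rfl, rfl⟩ := Sym2.eq_iff.1 heq
  · rfl
  · have := hpv.2
    have := hpv'.2
    lia

theorem childLabeling_mk_eq_none_iff {r x y : V}
    (hT : ∀ ⦃x y⦄, T.Adj x y → T.dist r x ≠ T.dist r y) (φ : V → α) :
    childLabeling T r φ s(x, y) = none ↔ ¬ T.Adj x y := by
  constructor
  · intro hnone hxy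
    have hparent : IsParent T r x y ∨ IsParent T r y x := by
      have := hxy.diff_dist_adj (u := r)
      grind [IsParent, SimpleGraph.Adj.symm]
    rcases hparent with h | h
    · simp [childLabeling_mk_of_isParent h] at hnone
    · simp [Sym2.eq_swap (a := x), childLabeling_mk_of_isParent h] at hnone
  · refine fun hxy => Function.extend_apply' _ _ _ ?_
    rintro ⟨⟨⟨p, v⟩, hpv⟩, heq⟩
    exact hxy ((T.mem_edgeSet).1 (heq ▸ hpv.1))

theorem isEdgeDistinguishing_childLabeling {r : V} {φ : V → α} (hTG : T ≤ G)
    (hT : ∀ ⦃x y⦄, T.Adj x y → T.dist r x ≠ T.dist r y)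
    (hsub : {u | ¬ T.Reachable r u}.Subsingleton) (hr : ∀ f : T ≃g T, f r = r)
    (hφ : IsVertexDistinguishing G φ) :
    IsEdgeDistinguishing G fun e => childLabeling T r φ e := by
  intro f hf
  have hlabel {x y : V} (h : G.Adj x y) :
      childLabeling T r φ s(f x, f y) = childLabeling T r φ s(x, y) :=
    hf ⟨s(x, y), h⟩
  have hadj {x y : V} : T.Adj (f x) (f y) ↔ T.Adj x y := by
    by_cases h : G.Adj x y
    · rw [← not_iff_not, ← childLabeling_mk_eq_none_iff hT φ, hlabel h,
        childLabeling_mk_eq_none_iff hT φ]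
    · exact iff_of_false (fun h' => h (f.map_adj_iff.1 (hTG h'))) fun h' => h (hTG h')
  let F : T ≃g T := ⟨f.toEquiv, hadj⟩
  have hFr : F r = r := hr F
  refine hφ f fun v => ?_
  by_cases hv : T.Reachable r v
  · by_cases hvr : v = r
    · rw [hvr]
      exact congrArg φ hFr
    · obtain ⟨p, hp⟩ := exists_isParent hv hvr
      have hFp : IsParent T r (f p) (f v) := hFr ▸ hp.map F
      have := hlabel (hTG hp.1)
      rw [childLabeling_mk_of_isParent hp, childLabeling_mk_of_isParent hFp] at this
      exact Option.some.inj this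
  · have hFv : ¬ T.Reachable r (f v) := fun h =>
      hv (Iso.reachable_iff (φ := F).1 (by rwa [hFr]))
    rw [hsub hFv hv]

end

/-- If `G` is a finite connected simple graph on at least 3 vertices,
then `D'(G) ≤ D(G) + 1`. -/
theorem distinguishingIndex_le_distinguishingNumber_add_one
    {V : Type*} [Fintype V] (G : SimpleGraph V)
    (hconn : G.Connected) (hcard : 3 ≤ Fintype.card V) :
    distinguishingIndex G ≤ distinguishingNumber G + 1 := by
  obtain ⟨φ, hφ⟩ := exists_isVertexDistinguishing_fin_distinguishingNumber G
  obtain ⟨T, hTG, r, hT, hsub, hr⟩ :=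
    exists_isAcyclic_le_forall_iso_apply_eq hconn (by rwa [Nat.card_eq_fintype_card])
  have hdist : ∀ ⦃x y⦄, T.Adj x y → T.dist r x ≠ T.dist r y := fun _ _ =>
    dist_ne_dist_of_subsingleton hT hsub
  have hψ := isEdgeDistinguishing_childLabeling hTG hdist hsub hr hφ
  simpa using hψ.distinguishingIndex_le_card
end
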